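/- The lamplighter group ℤ₂ ≀ ℤ = (⊕_{i∈ℤ} ℤ/2ℤ) ⋊ ℤ, where ℤ acts by shifting coordinates, is finitely generated, has exponential growth and linear divergence, and hence its Cayley graph (with respect to any finite symmetric generating set) admits exponentially many fat bigons; consequently ℤ₂ ≀ ℤ does not coarsely embed into any δ-hyperbolic connected graph of uniformly bounded degree. -/

import Mathlib

/-!
Fix a finite symmetric generating set and write `X` for the Cayley graph. All information about `X`
that is used is collected in `Comparison`: a path of length `n` moves the lamplighter by at most
`A * n` and changes only lamps within `A * n` of its starting position, while each of the standard
moves (step left or right, toggle the current lamp) costs at most `B`.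

*Growth.* There are `2 ^ M` configurations supported in `[0, M)`, all reached within distance
`O(M)`; submultiplicativity of the ball sizes and Fekete's lemma give a limit greater than `1`.

*Divergence.* By translation the avoided ball is centred at `1`. If `d(a, b)` is small compared with
the distance of `a, b` to `1`, a geodesic from `a` to `b` avoids the ball. Otherwise one escapes from
`a` and from `b` to distance `O(n)` along one of the two halves of a geodesic through the point
(`cayley_escape`). From a far-away point one can reach a fixed element with one very distant lit
lamp (the hub) while always keeping some lamp or the lamplighter itself far from the origin
(`std_to_hub`).

*Fat bigons.* Let `x` have its lamplighter at `0` and its lit lamps in `[0, M]`, with lamp `M` lit.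
A sweep through `[0, M]` is a path `γ` from `1` to `x`. Let `τ` light the lamps `-p` and `-2p`; it
commutes with `x`, so going from `1` to `τ`, along `τ γ` to `τ x = x τ`, and from there to `x` is a
second path. Points of `γ` and `τ γ` have different lamps at both `-p` and `-2p`, hence are at
distance at least of order `p`. The elements `x` are exponential in number.

*No coarse embedding.* The images of the two sides of a bigon are paths of length linear in `d(1, x)`
in a hyperbolic graph. Every point of a geodesic is within `O(log n)` of any path of length `n`
between its endpoints (`log_close`); an averaging argument over the points of the geodesic then shows that,
unless the geodesic is short, the two image paths come within bounded distance of each other away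
from their endpoints (`paths_meet`). As fat bigons forbid this, the images of the exponentially many
vertices `x` are at bounded distance from the image of `1`, contradicting bounded degree (`gBall_card`)
and properness of the embedding (`no_coarse_embedding_of_bigons`).
-/

open SimpleGraph

/-- A graph has uniformly bounded degree if there is a uniform finite bound on
the cardinality of all neighbour sets. -/
def BddDegree {V : Type*} (G : SimpleGraph V) : Prop :=
  ∃ D : ℕ, ∀ v : V, (G.neighborSet v).encard ≤ D

/-- A walk is geodesic if its length realizes the graph distance between its endpoints. -/
def SimpleGraph.Walk.IsGeodesic {V : Type*} {G : SimpleGraph V} {x y : V}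
    (w : G.Walk x y) : Prop :=
  w.length = G.dist x y

/-- A graph is `δ`-hyperbolic if each side of every geodesic triangle is contained in the
closed `δ`-neighbourhood of the union of the other two sides. -/
def GraphHyperbolic {V : Type*} (G : SimpleGraph V) (δ : ℝ) : Prop :=
  ∀ ⦃a b c : V⦄ (γ₁ : G.Walk a b) (γ₂ : G.Walk b c) (γ₃ : G.Walk c a),
    γ₁.IsGeodesic → γ₂.IsGeodesic → γ₃.IsGeodesic →
      ∀ u ∈ γ₁.support, ∃ v, (v ∈ γ₂.support ∨ v ∈ γ₃.support) ∧ (G.dist u v : ℝ) ≤ δ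

/-- `x` admits an `(L,s,C)`-bigon with respect to the basepoint `x₀`: two paths from `x₀`
to `x`, each of length at most `L·d(x₀,x)`, such that any vertex of the first path outside
the `C`-neighbourhood of `{x₀, x}` is at distance more than `s` from any vertex of the
second path outside that neighbourhood. -/
def IsBigonAt {V : Type*} (G : SimpleGraph V) (x₀ : V) (L s C : ℝ) (x : V) : Prop :=
  ∃ α₁ α₂ : G.Walk x₀ x,
    ((α₁.length : ℝ) ≤ L * G.dist x₀ x) ∧ ((α₂.length : ℝ) ≤ L * G.dist x₀ x) ∧
    ∀ u ∈ α₁.support, ∀ v ∈ α₂.support,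
      (C < (G.dist x₀ u : ℝ) ∧ C < (G.dist x u : ℝ)) →
      (C < (G.dist x₀ v : ℝ) ∧ C < (G.dist x v : ℝ)) →
      s < (G.dist u v : ℝ)

/-- The set `B^X(L,s,C)` of vertices admitting an `(L,s,C)`-bigon. -/
def bigonSet {V : Type*} (G : SimpleGraph V) (x₀ : V) (L s C : ℝ) : Set V :=
  {x | IsBigonAt G x₀ L s C x}

/-- The closed ball of radius `n` about `x` in the graph metric. -/
def gBall {V : Type*} (G : SimpleGraph V) (x : V) (n : ℕ) : Set V :=
  {v | G.dist x v ≤ n}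

/-- `X` has exponentially many fat bigons at `x₀`. -/
def HasExpManyFatBigons {V : Type*} (G : SimpleGraph V) (x₀ : V) : Prop :=
  ∃ s₀ c L : ℝ, 0 ≤ s₀ ∧ 1 < c ∧ 1 < L ∧
    ∀ s : ℝ, s₀ ≤ s → ∃ C : ℝ, 0 ≤ C ∧
      {n : ℕ | (c ^ n : ℝ) ≤ ((bigonSet G x₀ L s C ∩ gBall G x₀ n).ncard : ℝ)}.Infinite

/-- `X` has no fat bigons at `x₀`. -/
def HasNoFatBigons {V : Type*} (G : SimpleGraph V) (x₀ : V) : Prop :=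
  ∀ L : ℝ, 1 ≤ L → ∃ s : ℝ, 0 ≤ s ∧ ∀ C : ℝ, 0 ≤ C →
    ∃ R : ℕ, ∀ x ∈ bigonSet G x₀ L s C, G.dist x₀ x ≤ R

/-- A coarse embedding of the graph `G` into the graph `H`, with multiplicative constant `K`
and compression function `ρ`. -/
def IsCoarseEmbedding {V W : Type*} (G : SimpleGraph V) (H : SimpleGraph W)
    (f : V → W) (K : ℝ) (ρ : ℕ → ℕ) : Prop :=
  1 ≤ K ∧ Filter.Tendsto ρ Filter.atTop Filter.atTop ∧
    ∀ x y : V, (ρ (G.dist x y) : ℝ) ≤ (H.dist (f x) (f y) : ℝ) ∧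
      (H.dist (f x) (f y) : ℝ) ≤ K * (G.dist x y : ℝ)

/-- The Cayley graph of a group with respect to a (symmetric) set `S`. -/
def cayleyGraph (G : Type*) [Group G] (S : Set G) : SimpleGraph G :=
  SimpleGraph.fromRel (fun x y => x⁻¹ * y ∈ S)

/-- The Cayley graph of `G` w.r.t. the basepoint `1` has exponential growth:
`|B_n(1)|^(1/n)` converges to a limit `> 1`. -/
def HasExpGrowth {V : Type*} (G : SimpleGraph V) (x₀ : V) : Prop :=
  ∃ a : ℝ, 1 < a ∧
    Filter.Tendsto (fun n : ℕ => ((gBall G x₀ n).ncard : ℝ) ^ ((n : ℝ)⁻¹))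
      Filter.atTop (nhds a)

/-- `Div_X(n) ≤ M`: for all vertices `a b` with `d(a,b) ≤ n` and every `c ∉ {a, b}`, there is
a path from `a` to `b` of length at most `M` avoiding the ball around `c` of radius
`(1/2)·d(c,{a,b}) − 2`. -/
def DivLE {V : Type*} (G : SimpleGraph V) (n : ℕ) (M : ℝ) : Prop :=
  ∀ a b c : V, G.dist a b ≤ n → c ≠ a → c ≠ b →
    ∃ w : G.Walk a b, (w.length : ℝ) ≤ M ∧
      ∀ u ∈ w.support, ((min (G.dist c a) (G.dist c b) : ℝ)) / 2 - 2 < (G.dist c u : ℝ)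

/-- A group (given as a graph) is one-ended. -/
def OneEnded {V : Type*} (G : SimpleGraph V) : Prop :=
  ∃! e, e ∈ G.end

/-- The shift automorphism of `⊕_{i ∈ ℤ} ℤ/2ℤ` (as a multiplicative group),
shifting coordinates by one. -/
noncomputable def lampShift : MulAut (Multiplicative (ℤ →₀ ZMod 2)) :=
  AddEquiv.toMultiplicative (Finsupp.domCongr (Equiv.addRight (1 : ℤ)))

/-- The action of `ℤ` on `⊕_{i ∈ ℤ} ℤ/2ℤ` by shifting coordinates. -/
noncomputable def lampAction : Multiplicative ℤ →* MulAut (Multiplicative (ℤ →₀ ZMod 2)) :=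
  zpowersHom _ lampShift

/-- The lamplighter group `ℤ₂ ≀ ℤ = (⊕_{i ∈ ℤ} ℤ/2ℤ) ⋊ ℤ`, with `ℤ` acting by shifting
coordinates. -/
abbrev Lamplighter : Type :=
  SemidirectProduct (Multiplicative (ℤ →₀ ZMod 2)) (Multiplicative ℤ) lampAction

/-! ### Geodesic intervals in graphs -/

/-- `u` lies on some geodesic from `a` to `b`. -/
def OnGeod {V : Type*} (G : SimpleGraph V) (a u b : V) : Prop :=
  G.dist a u + G.dist u b = G.dist a b

lemma OnGeod.symm {V : Type*} {G : SimpleGraph V} {a u b : V} (h : OnGeod G a u b) : OnGeod G b u a := by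
  unfold OnGeod at *
  rw [G.dist_comm (u := b) (v := u), G.dist_comm (u := u) (v := a), G.dist_comm (u := b) (v := a)]
  omega

lemma btw_of_mem_geodesic {V : Type*} {G : SimpleGraph V} (hG : G.Connected) {a b u : V}
    {w : G.Walk a b} (hw : w.length = G.dist a b) (hu : u ∈ w.support) : OnGeod G a u b := by
  classical
  have h1 := SimpleGraph.dist_le (w.takeUntil u hu)
  have h2 := SimpleGraph.dist_le (w.dropUntil u hu)
  have h3 := congrArg Walk.length (w.take_spec hu)
  rw [Walk.length_append] at h3
  have h4 := hG.dist_triangle (u := a) (v := u) (w := b)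
  unfold OnGeod
  omega

lemma exists_geodesic_through {V : Type*} {G : SimpleGraph V} (hG : G.Connected) {a b u : V}
    (h : OnGeod G a u b) : ∃ w : G.Walk a b, w.length = G.dist a b ∧ u ∈ w.support := by
  obtain ⟨w₁, h₁⟩ := hG.exists_walk_length_eq_dist a u
  obtain ⟨w₂, h₂⟩ := hG.exists_walk_length_eq_dist u b
  refine ⟨w₁.append w₂, ?_, ?_⟩
  · rw [Walk.length_append, h₁, h₂]; exact h
  · simp [Walk.mem_support_append_iff]

lemma exists_btw {V : Type*} {G : SimpleGraph V} (hG : G.Connected) {a b : V} {k : ℕ}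
    (hk : k ≤ G.dist a b) : ∃ q, G.dist a q = k ∧ G.dist q b + k = G.dist a b := by
  obtain ⟨w, hw⟩ := hG.exists_walk_length_eq_dist a b
  refine ⟨w.getVert k, ?_⟩
  have h1 := SimpleGraph.dist_le (w.take k)
  have h2 := SimpleGraph.dist_le (w.drop k)
  rw [Walk.take_length] at h1
  rw [Walk.drop_length] at h2
  have h4 := hG.dist_triangle (u := a) (v := w.getVert k) (w := b)
  omega

/-- Thin triangles, phrased through geodesic intervals and with an integral constant. -/
def ThinN {V : Type*} (G : SimpleGraph V) (δ : ℕ) : Prop :=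
  ∀ a b c u : V, OnGeod G a u b → ∃ v, (OnGeod G b v c ∨ OnGeod G c v a) ∧ G.dist u v ≤ δ

lemma thinN_of_hyperbolic {V : Type*} {G : SimpleGraph V} (hG : G.Connected) {δ : ℝ}
    (h : GraphHyperbolic G δ) : ThinN G ⌊δ⌋₊ := by
  intro a b c u hu
  obtain ⟨w, hw, huw⟩ := exists_geodesic_through hG hu
  obtain ⟨w₂, h₂⟩ := hG.exists_walk_length_eq_dist b c
  obtain ⟨w₃, h₃⟩ := hG.exists_walk_length_eq_dist c a
  obtain ⟨v, hv, hd⟩ := h w w₂ w₃ hw h₂ h₃ u huw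
  exact ⟨v, hv.imp (btw_of_mem_geodesic hG h₂) (btw_of_mem_geodesic hG h₃), Nat.le_floor hd⟩

/-! ### Coarse paths in hyperbolic graphs -/

/-- A geodesic between the endpoints of a coarse path with at most `2 ^ k` steps stays at
distance `O(k)` from the path: bisect the path and use one thin triangle per bisection. -/
lemma log_close {V : Type*} {G : SimpleGraph V} {δ K : ℕ}
    (hG : G.Connected) (hδ : ThinN G δ) {y : ℕ → V} (hy : ∀ t, G.dist (y t) (y (t + 1)) ≤ K)
    (k : ℕ) : ∀ i j u, i ≤ j → j ≤ i + 2 ^ k → OnGeod G (y i) u (y j) →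
      ∃ t, i ≤ t ∧ t ≤ j ∧ G.dist u (y t) ≤ δ * k + K := by
  induction k with
  | zero =>
    intro i j u hij hj hu
    refine ⟨i, le_rfl, hij, ?_⟩
    have h0 : G.dist (y i) (y j) ≤ K := by
      rcases (by omega : j = i ∨ j = i + 1) with rfl | rfl
      · simp
      · exact hy i
    unfold OnGeod at hu
    rw [G.dist_comm]
    omega
  | succ k ih =>
    intro i j u hij hj hu
    rw [pow_succ] at hj
    have hm : ∃ m, i ≤ m ∧ m ≤ j ∧ m ≤ i + 2 ^ k ∧ j ≤ m + 2 ^ k :=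
      ⟨min j (i + 2 ^ k), by omega, by omega, by omega, by omega⟩
    obtain ⟨m, h1, h2, h3, h4⟩ := hm
    obtain ⟨v, hv, hd⟩ := hδ _ _ (y m) _ hu
    have : ∃ t, i ≤ t ∧ t ≤ j ∧ G.dist v (y t) ≤ δ * k + K := by
      rcases hv with hv | hv
      · obtain ⟨t, a1, a2, a3⟩ := ih m j v h2 h4 hv.symm
        exact ⟨t, by omega, a2, a3⟩
      · obtain ⟨t, a1, a2, a3⟩ := ih i m v h1 h3 hv.symm
        exact ⟨t, a1, by omega, a3⟩
    obtain ⟨t, a1, a2, a3⟩ := this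
    refine ⟨t, a1, a2, ?_⟩
    have := hG.dist_triangle (u := u) (v := v) (w := y t)
    rw [mul_add]
    omega

/-- If `y` is behind and `z` is ahead of the point `q` of a geodesic from `a` to `b`, as measured
by the function `dist a · - dist b ·`, then any geodesic from `y` to `z` passes near `q`. -/
lemma quad_close {V : Type*} {G : SimpleGraph V} {δ : ℕ}
    (hG : G.Connected) (hδ : ThinN G δ) {a b q y z : V} (hq : OnGeod G a q b)
    (hy : G.dist a y + G.dist q b + 4 * δ < G.dist b y + G.dist a q)
    (hz : G.dist b z + G.dist a q + 4 * δ < G.dist a z + G.dist q b) :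
    ∃ v, OnGeod G y v z ∧ G.dist q v ≤ 2 * δ := by
  obtain ⟨v, hv, hd⟩ := hδ _ _ y _ hq
  rcases hv with hv | hv
  · obtain ⟨v', hv', hd'⟩ := hδ _ _ z _ hv
    have h2 := hG.dist_triangle (u := q) (v := v) (w := v')
    rcases hv' with hv' | hv'
    · exact ⟨v', hv', by omega⟩
    · exfalso
      unfold OnGeod at hv'
      have e1 := G.dist_comm (u := b) (v := z)
      have e2 := G.dist_comm (u := b) (v := v')
      have e3 := G.dist_comm (u := z) (v := v')
      have e4 := G.dist_comm (u := q) (v := v')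
      have h3 := hG.dist_triangle (u := a) (v := q) (w := z)
      have h5 := hG.dist_triangle (u := q) (v := v') (w := z)
      have h6 := hG.dist_triangle (u := q) (v := v') (w := b)
      omega
  · exfalso
    unfold OnGeod at hv
    have e1 := G.dist_comm (u := a) (v := y)
    have e2 := G.dist_comm (u := a) (v := v)
    have e3 := G.dist_comm (u := y) (v := v)
    have e4 := G.dist_comm (u := q) (v := v)
    have e5 := G.dist_comm (u := b) (v := q)
    have h3 := hG.dist_triangle (u := b) (v := q) (w := y)
    have h5 := hG.dist_triangle (u := q) (v := v) (w := y)
    have h6 := hG.dist_triangle (u := a) (v := v) (w := q)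
    have e6 := G.dist_comm (u := v) (v := q)
    omega

/-- First-passage times: `τ p` is the first time the coarse path `y` from `a` to `b` passes the
level of the point at distance `p` from `a`. Any geodesic point at an intermediate level is close
to the portion of `y` between two such times. -/
lemma exists_passage {V : Type*} {G : SimpleGraph V} {δ K : ℕ}
    (hG : G.Connected) (hδ : ThinN G δ) {y : ℕ → V} (hy : ∀ t, G.dist (y t) (y (t + 1)) ≤ K)
    {a b : V} {l : ℕ} (h0 : y 0 = a) (hl : y l = b) :
    ∃ τ : ℕ → ℕ, (∀ p p', p ≤ p' → p' ≤ G.dist a b → τ p ≤ τ p') ∧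
      (∀ p, p ≤ G.dist a b → τ p ≤ l) ∧
      ∀ p p' q κ, p' ≤ G.dist a b → OnGeod G a q b → p + K + 2 * δ < G.dist a q →
        G.dist a q + 2 * δ < p' → τ p' ≤ τ p + 2 ^ κ →
        ∃ t, G.dist q (y t) ≤ 2 * δ + (δ * κ + K) := by
  classical
  set d := G.dist a b with hd
  have hex : ∀ p, p ≤ d → ∃ t, G.dist b (y t) + 2 * p ≤ G.dist a (y t) + d := by
    intro p hp
    refine ⟨l, ?_⟩
    rw [hl, G.dist_self, ← hd]
    omega
  let τ : ℕ → ℕ := fun p => if h : p ≤ d then Nat.find (hex p h) else 0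
  have hτ : ∀ p, p ≤ d → G.dist b (y (τ p)) + 2 * p ≤ G.dist a (y (τ p)) + d := by
    intro p hp
    simp only [τ, dif_pos hp]
    exact Nat.find_spec (hex p hp)
  have hmin : ∀ p t, p ≤ d → G.dist b (y t) + 2 * p ≤ G.dist a (y t) + d → τ p ≤ t := by
    intro p t hp h
    simp only [τ, dif_pos hp]
    exact Nat.find_min' (hex p hp) h
  have hup : ∀ p, p ≤ d → G.dist a (y (τ p)) + d ≤ G.dist b (y (τ p)) + 2 * p + 2 * K := by
    intro p hp
    rcases Nat.eq_zero_or_pos (τ p) with h | h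
    · rw [h, h0, G.dist_self, G.dist_comm, ← hd]
      omega
    · obtain ⟨t, ht⟩ : ∃ t, τ p = t + 1 := ⟨τ p - 1, by omega⟩
      have h1 : ¬ (G.dist b (y t) + 2 * p ≤ G.dist a (y t) + d) := by
        intro h'
        have := hmin p t hp h'
        omega
      rw [ht]
      have h2 := hG.dist_triangle (u := a) (v := y t) (w := y (t + 1))
      have h3 := hG.dist_triangle (u := b) (v := y (t + 1)) (w := y t)
      have h4 := G.dist_comm (u := y t) (v := y (t + 1))
      have h5 := hy t
      omega
  have hmono : ∀ p p', p ≤ p' → p' ≤ d → τ p ≤ τ p' := by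
    intro p p' h h'
    apply hmin p _ (by omega)
    have := hτ p' h'
    omega
  refine ⟨τ, hmono, ?_, ?_⟩
  · intro p hp
    apply hmin p l hp
    rw [hl, G.dist_self, ← hd]
    omega
  · intro p p' q κ hp' hq h1 h2 h3
    have hq' := hq
    unfold OnGeod at hq'
    have a1 := hup p (by omega)
    have a2 := hτ p' hp'
    obtain ⟨v, hv, hqv⟩ := quad_close hG hδ hq (y := y (τ p)) (z := y (τ p'))
      (by omega) (by omega)
    obtain ⟨t, -, -, ht⟩ := log_close hG hδ hy κ _ _ v (hmono p p' (by omega) hp') h3 hv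
    have := hG.dist_triangle (u := q) (v := v) (w := y t)
    exact ⟨t, by omega⟩

/-- In a hyperbolic graph, two coarse paths with the same endpoints whose lengths are linear in
the distance `d` between the endpoints come within a uniform distance `2 * D` of each other at a
place far from both endpoints, once `d` is large. The geodesic is cut into blocks of length `m`;
on average both paths spend a bounded time over a block, and `exists_passage` applies there. -/
lemma paths_meet {V : Type*} {G : SimpleGraph V} {δ : ℕ} (hG : G.Connected) (hδ : ThinN G δ)
    (K L : ℕ) : ∃ D : ℕ, ∀ C : ℕ, ∃ R : ℕ, ∀ a b : V, R ≤ G.dist a b →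
      ∀ (y z : ℕ → V) (l l' : ℕ), (∀ t, G.dist (y t) (y (t + 1)) ≤ K) →
      (∀ t, G.dist (z t) (z (t + 1)) ≤ K) → y 0 = a → z 0 = a → y l = b → z l' = b →
      l ≤ L * G.dist a b → l' ≤ L * G.dist a b →
      ∃ i j, G.dist (y i) (z j) ≤ 2 * D ∧ C < G.dist a (y i) ∧ C < G.dist b (y i) ∧
        C < G.dist a (z j) ∧ C < G.dist b (z j) := by
  set m := 2 * (K + 2 * δ + 1) with hm
  obtain ⟨κ, hκ⟩ : ∃ κ : ℕ, 8 * L * m ≤ 2 ^ κ := ⟨8 * L * m, Nat.lt_two_pow_self.le⟩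
  set D := 2 * δ + (δ * κ + K) with hD
  refine ⟨D, fun C => ?_⟩
  set i0 := C + D + 1 with hi0
  refine ⟨4 * m * (i0 + 1), ?_⟩
  intro a b hR y z l l' hy hz y0 z0 yl zl hl hl'
  set d := G.dist a b with hd
  obtain ⟨τ, τm, τl, τq⟩ := exists_passage hG hδ hy y0 yl
  obtain ⟨σ, σm, σl, σq⟩ := exists_passage hG hδ hz z0 zl
  have hmpos : 0 < m := by omega
  set n := d / (2 * m) with hn
  have hn1 : n * (2 * m) ≤ d := Nat.div_mul_le_self _ _
  have hn2 : d < (n + 1) * (2 * m) := by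
    have := Nat.lt_div_mul_add (a := d) (b := 2 * m) (by omega)
    rw [← hn] at this
    nlinarith
  have hdn : d ≤ 4 * m * n := by nlinarith
  have hnpos : 0 < n := by
    rcases Nat.eq_zero_or_pos n with h | h
    · rw [h] at hdn; nlinarith
    · exact h
  have hend : (i0 + n) * m + i0 * m ≤ d := by nlinarith
  have hlev : ∀ i, i ≤ n → (i0 + i) * m ≤ d := by
    intro i hi
    have : (i0 + i) * m ≤ (i0 + n) * m := Nat.mul_le_mul_right _ (by omega)
    omega
  -- A block over which the two paths together spend at most `2 ^ κ` steps.
  obtain ⟨i, hi, hiτ, hiσ⟩ : ∃ i, i < n ∧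
      τ ((i0 + (i + 1)) * m) ≤ τ ((i0 + i) * m) + 2 ^ κ ∧
      σ ((i0 + (i + 1)) * m) ≤ σ ((i0 + i) * m) + 2 ^ κ := by
    by_contra! hcon
    have key : ∀ k, k ≤ n → k * 2 ^ κ + τ (i0 * m) + σ (i0 * m) ≤
        τ ((i0 + k) * m) + σ ((i0 + k) * m) := by
      intro k
      induction k with
      | zero => intro _; simp
      | succ k ih =>
        intro hk
        have h1 := ih (by omega)
        have h2 := hcon k (by omega)
        have hle : (i0 + k) * m ≤ (i0 + (k + 1)) * m := Nat.mul_le_mul_right _ (by omega)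
        have h3 := τm _ _ hle (hlev (k + 1) hk)
        have h4 := σm _ _ hle (hlev (k + 1) hk)
        rw [add_mul]
        by_cases h5 : τ ((i0 + (k + 1)) * m) ≤ τ ((i0 + k) * m) + 2 ^ κ
        · have := h2 h5
          omega
        · omega
    have strict : n * 2 ^ κ < τ ((i0 + n) * m) + σ ((i0 + n) * m) := by
      obtain ⟨k, hk⟩ : ∃ k, n = k + 1 := ⟨n - 1, by omega⟩
      have h1 := key k (by omega)
      have h2 := hcon k (by omega)
      have hle : (i0 + k) * m ≤ (i0 + (k + 1)) * m := Nat.mul_le_mul_right _ (by omega)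
      have h3 := τm _ _ hle (hlev (k + 1) (by omega))
      have h4 := σm _ _ hle (hlev (k + 1) (by omega))
      rw [hk, add_mul]
      by_cases h5 : τ ((i0 + (k + 1)) * m) ≤ τ ((i0 + k) * m) + 2 ^ κ
      · have := h2 h5
        omega
      · omega
    have h1 := τl _ (hlev n le_rfl)
    have h2 := σl _ (hlev n le_rfl)
    have h3 : n * (8 * L * m) ≤ n * 2 ^ κ := Nat.mul_le_mul_left _ hκ
    have h4 : L * d ≤ L * (4 * m * n) := Nat.mul_le_mul_left _ hdn
    nlinarith
  have hstep : (i0 + (i + 1)) * m = (i0 + i) * m + m := by ring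
  have hb := hlev (i + 1) (by omega)
  obtain ⟨q, hq1, hq2⟩ := exists_btw hG (a := a) (b := b)
    (k := (i0 + i) * m + (K + 2 * δ + 1)) (by omega)
  have hqb : OnGeod G a q b := by unfold OnGeod; omega
  obtain ⟨t, ht⟩ := τq _ _ q κ hb hqb (by omega) (by omega) hiτ
  obtain ⟨s, hs⟩ := σq _ _ q κ hb hqb (by omega) (by omega) hiσ
  have hfa : i0 ≤ G.dist a q := by
    rw [hq1]; nlinarith
  have hfb : i0 ≤ G.dist q b := by
    have : (i0 + (i + 1)) * m ≤ (i0 + n) * m := Nat.mul_le_mul_right _ (by omega)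
    have : i0 ≤ i0 * m := Nat.le_mul_of_pos_right _ hmpos
    omega
  have e1 := G.dist_comm (u := q) (v := y t)
  have e2 := G.dist_comm (u := q) (v := z s)
  have e3 := G.dist_comm (u := q) (v := b)
  have t1 := hG.dist_triangle (u := y t) (v := q) (w := z s)
  have t2 := hG.dist_triangle (u := a) (v := y t) (w := q)
  have t3 := hG.dist_triangle (u := a) (v := z s) (w := q)
  have t4 := hG.dist_triangle (u := b) (v := y t) (w := q)
  have t5 := hG.dist_triangle (u := b) (v := z s) (w := q)
  exact ⟨t, s, by omega, by omega, by omega, by omega, by omega⟩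

/-! ### Counting in graphs of bounded degree -/

lemma gBall_card {V : Type*} {G : SimpleGraph V} (hG : G.Connected) {D : ℕ}
    (hD : ∀ v : V, (G.neighborSet v).encard ≤ D) (x : V) (n : ℕ) :
    (gBall G x n).Finite ∧ (gBall G x n).ncard ≤ (D + 1) ^ n := by
  have hfin : ∀ v, (G.neighborSet v).Finite := fun v =>
    Set.finite_of_encard_le_coe (hD v)
  have hcard : ∀ v, (insert v (G.neighborSet v)).ncard ≤ D + 1 := by
    intro v
    refine (Set.ncard_insert_le _ _).trans ?_
    have := hD v
    rw [← (hfin v).cast_ncard_eq] at this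
    have : (G.neighborSet v).ncard ≤ D := by exact_mod_cast this
    omega
  induction n with
  | zero =>
    have : gBall G x 0 = {x} := by
      ext v
      simp only [gBall, Set.mem_ofPred_eq, Set.mem_singleton_iff, Nat.le_zero]
      rw [hG.dist_eq_zero_iff]
      exact eq_comm
    rw [this]
    simp
  | succ n ih =>
    obtain ⟨ih1, ih2⟩ := ih
    have hsub : gBall G x (n + 1) ⊆ ⋃ v ∈ gBall G x n, insert v (G.neighborSet v) := by
      intro v hv
      simp only [gBall, Set.mem_ofPred_eq] at hv
      simp only [Set.mem_iUnion]
      rcases Nat.lt_or_ge n (G.dist x v) with h | h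
      · obtain ⟨q, hq1, hq2⟩ := exists_btw hG (a := x) (b := v) (k := n) (by omega)
        refine ⟨q, by simp [gBall, hq1], Or.inr ?_⟩
        rw [SimpleGraph.mem_neighborSet, ← SimpleGraph.dist_eq_one_iff_adj]
        omega
      · exact ⟨v, h, Or.inl rfl⟩
    have hU : (⋃ v ∈ gBall G x n, insert v (G.neighborSet v)).Finite :=
      ih1.biUnion fun v _ => (hfin v).insert v
    refine ⟨hU.subset hsub, (Set.ncard_le_ncard hsub hU).trans ?_⟩
    have h1 := ih1.toFinset.set_ncard_biUnion_le fun v => insert v (G.neighborSet v)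
    simp only [Set.Finite.mem_toFinset] at h1
    refine h1.trans ((Finset.sum_le_card_nsmul _ _ (D + 1) fun v _ => hcard v).trans ?_)
    rw [← Set.ncard_eq_toFinset_card _ ih1, smul_eq_mul, pow_succ]
    exact Nat.mul_le_mul_right _ ih2

/-- The general obstruction. A coarse embedding is uniformly finite-to-one, so by counting, among
exponentially many bigon vertices `x` in the ball of radius `n` there is one whose image is at
distance proportional to `n` from the image of the basepoint. The image of its bigon then
contradicts `paths_meet`. -/
lemma no_coarse_embedding_of_bigons {V W : Type*} {X : SimpleGraph V} {Y : SimpleGraph W}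
    (hX : X.Connected) (bX : BddDegree X) (hY : Y.Connected) (bY : BddDegree Y) {x₀ : V}
    (hbig : HasExpManyFatBigons X x₀) {δ : ℝ} (hδ : GraphHyperbolic Y δ)
    (f : V → W) (K : ℝ) (ρ : ℕ → ℕ) : ¬ IsCoarseEmbedding X Y f K ρ := by
  classical
  rintro ⟨hK, hρ, hf⟩
  obtain ⟨DX, hDX⟩ := bX
  obtain ⟨D, hD⟩ := bY
  obtain ⟨s₀, c, L, hs₀, hc, hL, hbig⟩ := hbig
  obtain ⟨q, hq⟩ := pow_unbounded_of_one_lt ((D : ℝ) + 1) hc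
  have hqpos : 0 < q := by
    rcases Nat.eq_zero_or_pos q with h | h
    · rw [h, pow_zero] at hq
      have : (0 : ℝ) ≤ D := Nat.cast_nonneg D
      linarith
    · exact h
  have hfn : ∀ u v, Y.dist (f u) (f v) ≤ ⌈K⌉₊ * X.dist u v := by
    intro u v
    have h1 := (hf u v).2
    have h2 : K * X.dist u v ≤ (⌈K⌉₊ : ℝ) * X.dist u v :=
      mul_le_mul_of_nonneg_right (Nat.le_ceil K) (Nat.cast_nonneg _)
    exact_mod_cast h1.trans h2
  obtain ⟨D₀, hD₀⟩ := paths_meet hY (thinN_of_hyperbolic hY hδ) ⌈K⌉₊ (⌈L⌉₊ * (2 * q))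
  obtain ⟨s₁, hs₁⟩ := Filter.eventually_atTop.1 (hρ.eventually_ge_atTop (2 * D₀ + 1))
  obtain ⟨r₀, hr₀⟩ := Filter.eventually_atTop.1 (hρ.eventually_ge_atTop 1)
  obtain ⟨C, hC, hinf⟩ := hbig (max s₀ s₁) (le_max_left _ _)
  obtain ⟨R, hR⟩ := hD₀ (⌈K⌉₊ * ⌈C⌉₊)
  set F := (DX + 1) ^ r₀ with hF
  obtain ⟨N, hN⟩ := pow_unbounded_of_one_lt (F : ℝ) hc
  obtain ⟨n, hn, hnlarge⟩ := hinf.exists_gt (2 * N + 2 * q * R)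
  simp only [Set.mem_ofPred_eq] at hn
  set m := n / (2 * q) with hm
  set T := bigonSet X x₀ L (max s₀ s₁) C ∩ gBall X x₀ n with hT
  have hTfin : T.Finite := (gBall_card hX hDX x₀ n).1.subset Set.inter_subset_right
  have hmn : m * (2 * q) ≤ n := Nat.div_mul_le_self _ _
  have hmn' : n < (m + 1) * (2 * q) := by
    have := Nat.lt_div_mul_add (a := n) (b := 2 * q) (by omega)
    rw [← hm] at this
    nlinarith
  have hmR : R ≤ m := by
    rw [hm, Nat.le_div_iff_mul_le (by omega)]
    nlinarith
  obtain ⟨x, hxT, hx⟩ : ∃ x ∈ T, m < Y.dist (f x₀) (f x) := by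
    by_contra! hcon
    have hball := gBall_card hY hD (f x₀) m
    have hcard := Finset.card_le_mul_card_image_of_maps_to (s := hTfin.toFinset)
      (t := hball.1.toFinset) (f := f)
      (by intro a ha; simpa [gBall] using hcon a (by simpa using ha)) F
      (by
        intro w _
        rcases Finset.eq_empty_or_nonempty (Finset.filter (fun a => f a = w) hTfin.toFinset)
          with h | ⟨x, hx⟩
        · rw [h]; simp
        · have hb := gBall_card hX hDX x r₀
          refine le_trans ?_ hb.2
          rw [← Set.ncard_coe_finset]
          refine Set.ncard_le_ncard ?_ hb.1
          intro y hy
          simp only [Finset.coe_filter, Set.mem_ofPred_eq, Finset.mem_filter] at hx hy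
          by_contra hfar
          simp only [gBall, Set.mem_ofPred_eq, not_le] at hfar
          have h1 := hr₀ _ hfar.le
          have h2 := (hf x y).1
          rw [hx.2, hy.2, Y.dist_self] at h2
          have : ρ (X.dist x y) ≤ 0 := by exact_mod_cast h2
          omega)
    rw [← Set.ncard_eq_toFinset_card _ hTfin, ← Set.ncard_eq_toFinset_card _ hball.1] at hcard
    have h1 : T.ncard ≤ F * (D + 1) ^ m := hcard.trans (Nat.mul_le_mul_left _ hball.2)
    have h2 : (T.ncard : ℝ) ≤ F * ((D : ℝ) + 1) ^ m := by exact_mod_cast h1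
    have h3 : ((D : ℝ) + 1) ^ m ≤ c ^ (q * m) := by
      rw [pow_mul]
      exact pow_le_pow_left₀ (by positivity) hq.le m
    have h4 : (F : ℝ) * ((D : ℝ) + 1) ^ m < c ^ N * c ^ (q * m) :=
      mul_lt_mul hN h3 (by positivity) (by positivity)
    rw [← pow_add] at h4
    have h5 : c ^ (N + q * m) ≤ c ^ n := by
      refine pow_le_pow_right₀ hc.le ?_
      have : m * (2 * q) = 2 * (q * m) := by ring
      have : 0 ≤ 2 * q * R := Nat.zero_le _
      omega
    linarith
  obtain ⟨⟨α₁, α₂, hl₁, hl₂, hsep⟩, hxn⟩ := hxT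
  simp only [gBall, Set.mem_ofPred_eq] at hxn
  have hdist : X.dist x₀ x ≤ 2 * q * Y.dist (f x₀) (f x) := by
    have : (m + 1) * (2 * q) ≤ Y.dist (f x₀) (f x) * (2 * q) := Nat.mul_le_mul_right _ hx
    linarith
  have hlen : ∀ l : ℕ, (l : ℝ) ≤ L * X.dist x₀ x →
      l ≤ ⌈L⌉₊ * (2 * q) * Y.dist (f x₀) (f x) := by
    intro l hl
    have h2 : L * X.dist x₀ x ≤ (⌈L⌉₊ : ℝ) * X.dist x₀ x :=
      mul_le_mul_of_nonneg_right (Nat.le_ceil L) (Nat.cast_nonneg _)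
    have h3 : l ≤ ⌈L⌉₊ * X.dist x₀ x := by exact_mod_cast hl.trans h2
    have := Nat.mul_le_mul_left ⌈L⌉₊ hdist
    rw [mul_assoc]
    omega
  have hstep : ∀ (α : X.Walk x₀ x) t,
      Y.dist (f (α.getVert t)) (f (α.getVert (t + 1))) ≤ ⌈K⌉₊ := by
    intro α t
    rcases Nat.lt_or_ge t α.length with h | h
    · have h1 := hfn (α.getVert t) (α.getVert (t + 1))
      rwa [SimpleGraph.dist_eq_one_iff_adj.2 (α.adj_getVert_succ h), mul_one] at h1
    · rw [α.getVert_of_length_le h, α.getVert_of_length_le (by omega), Y.dist_self]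
      exact Nat.zero_le _
  obtain ⟨i, j, hij, h1, h2, h3, h4⟩ := hR (f x₀) (f x) (by omega)
    (fun t => f (α₁.getVert t)) (fun t => f (α₂.getVert t)) α₁.length α₂.length
    (hstep α₁) (hstep α₂) (by simp) (by simp) (by simp) (by simp) (hlen _ hl₁) (hlen _ hl₂)
  have hpull : ∀ u v, ⌈K⌉₊ * ⌈C⌉₊ < Y.dist (f u) (f v) → C < (X.dist u v : ℝ) := by
    intro u v h
    have h' := lt_of_mul_lt_mul_left (h.trans_le (hfn u v)) (Nat.zero_le _)
    exact Nat.lt_of_ceil_lt h'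
  have hs := hsep _ (α₁.getVert_mem_support i) _ (α₂.getVert_mem_support j)
    ⟨hpull _ _ h1, hpull _ _ h2⟩ ⟨hpull _ _ h3, hpull _ _ h4⟩
  have hs' : (s₁ : ℝ) < X.dist (α₁.getVert i) (α₂.getVert j) := (le_max_right _ _).trans_lt hs
  have h5 := hs₁ _ (by exact_mod_cast hs'.le)
  have h6 : ρ (X.dist (α₁.getVert i) (α₂.getVert j)) ≤
      Y.dist (f (α₁.getVert i)) (f (α₂.getVert j)) := by exact_mod_cast (hf _ _).1
  omega

/-! ### Paths of bounded length -/

/-- `BPath r P n x y`: there is a path from `x` to `y` with at most `n` steps, each of them an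
instance of `r`, all of whose points satisfy `P`. -/
inductive BPath {α : Type*} (r : α → α → Prop) (P : α → Prop) : ℕ → α → α → Prop
  | nil (n : ℕ) (x : α) : P x → BPath r P n x x
  | cons {n : ℕ} {x y z : α} : P x → r x y → BPath r P n y z → BPath r P (n + 1) x z

namespace BPath

variable {α : Type*} {r r' : α → α → Prop} {P Q : α → Prop} {n m : ℕ} {x y z : α}

lemma mono (h : BPath r P n x y) (hnm : n ≤ m) (hPQ : ∀ u, P u → Q u) : BPath r Q m x y := by
  induction h generalizing m with
  | nil n x hx => exact .nil _ _ (hPQ _ hx)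
  | cons hx hr _ ih =>
    obtain ⟨k, rfl⟩ : ∃ k, m = k + 1 := ⟨m - 1, by omega⟩
    exact .cons (hPQ _ hx) hr (ih (by omega))

lemma trans (h : BPath r P n x y) (h' : BPath r P m y z) : BPath r P (n + m) x z := by
  induction h with
  | nil n x hx => exact h'.mono (by omega) fun _ => id
  | @cons n _ _ _ hx hr _ ih =>
    rw [show n + 1 + m = n + m + 1 by omega]
    exact .cons hx hr (ih h')

lemma left (h : BPath r P n x y) : P x := by
  cases h <;> assumption

lemma right (h : BPath r P n x y) : P y := by
  induction h <;> assumption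

lemma single (hx : P x) (hy : P y) (h : r x y) : BPath r P 1 x y :=
  .cons hx h (.nil 0 y hy)

lemma symm (hr : ∀ x y, r x y → r y x) (h : BPath r P n x y) : BPath r P n y x := by
  induction h with
  | nil n x hx => exact .nil _ _ hx
  | cons hx h1 h2 ih => exact ih.trans (single h2.left hx (hr _ _ h1))

lemma map (g : α → α) (hg : ∀ x y, r x y → r (g x) (g y))
    (h : BPath r (fun u => P (g u)) n x y) : BPath r P n (g x) (g y) := by
  induction h with
  | nil n x hx => exact .nil _ _ hx
  | cons hx h1 _ ih => exact .cons hx (hg _ _ h1) ih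

/-- Replacing each `r`-step by a path of at most `B` `r'`-steps. -/
lemma subdivide {near : α → α → Prop} (hn : ∀ x, near x x) {B : ℕ}
    (hr : ∀ x y, r x y → BPath r' (near x) B x y) (h : BPath r P n x y) :
    BPath r' (fun u => ∃ z, P z ∧ near z u) (B * n) x y := by
  induction h with
  | nil n x hx => exact .nil _ _ ⟨x, hx, hn x⟩
  | @cons n x y z hx h1 h2 ih =>
    rw [mul_add, mul_one, add_comm]
    exact ((hr _ _ h1).mono le_rfl fun u hu => ⟨x, hx, hu⟩).trans ih

lemma exists_walk {G : SimpleGraph α} (h : BPath G.Adj P n x y) :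
    ∃ w : G.Walk x y, w.length ≤ n ∧ ∀ u ∈ w.support, P u := by
  induction h with
  | nil n x hx => exact ⟨.nil, by simp, by simpa using hx⟩
  | cons hx h1 _ ih =>
    obtain ⟨w, hw, hP⟩ := ih
    refine ⟨.cons h1 w, by simpa using hw, ?_⟩
    intro u hu
    rw [Walk.support_cons, List.mem_cons] at hu
    rcases hu with rfl | hu
    · exact hx
    · exact hP u hu

lemma of_walk {G : SimpleGraph α} (w : G.Walk x y) (h : ∀ u ∈ w.support, P u) :
    BPath G.Adj P w.length x y := by
  induction w with
  | nil => exact .nil _ _ (h _ (by simp))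
  | cons h1 w ih =>
    rw [Walk.length_cons]
    exact .cons (h _ (by simp)) h1 (ih fun u hu => h u (by simp [hu]))

end BPath

/-! ### Cayley graphs -/

section Cayley

variable {Γ : Type*} [Group Γ] {S : Set Γ}

lemma cayley_adj (hS : S⁻¹ = S) {x y : Γ} :
    (cayleyGraph Γ S).Adj x y ↔ x ≠ y ∧ x⁻¹ * y ∈ S := by
  rw [cayleyGraph, SimpleGraph.fromRel_adj]
  have : y⁻¹ * x ∈ S ↔ x⁻¹ * y ∈ S := by
    rw [← Set.inv_mem_inv (s := S), hS]; simp
  rw [this, or_self]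

lemma cayley_adj_mul (hS : S⁻¹ = S) (g : Γ) {x y : Γ} (h : (cayleyGraph Γ S).Adj x y) :
    (cayleyGraph Γ S).Adj (g * x) (g * y) := by
  rw [cayley_adj hS] at *
  refine ⟨fun e => h.1 (mul_left_cancel e), ?_⟩
  simpa [mul_assoc] using h.2

lemma cayley_connected (hS : S⁻¹ = S) (hgen : Subgroup.closure S = ⊤) :
    (cayleyGraph Γ S).Connected := by
  have key : ∀ g : Γ, ∀ x, (cayleyGraph Γ S).Reachable x (x * g) := by
    intro g
    have hg : g ∈ Subgroup.closure S := by rw [hgen]; trivial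
    induction hg using Subgroup.closure_induction with
    | mem s hs =>
      intro x
      by_cases h : x = x * s
      · rw [← h]
      · exact SimpleGraph.Adj.reachable ((cayley_adj hS).2 ⟨h, by simpa using hs⟩)
    | one => intro x; rw [mul_one]
    | mul a b _ _ ha hb => intro x; rw [← mul_assoc]; exact (ha x).trans (hb _)
    | inv a _ ha => intro x; simpa using (ha (x * a⁻¹)).symm
  exact { preconnected := fun x y => by simpa using key (x⁻¹ * y) x, nonempty := ⟨1⟩ }

lemma cayley_dist_mul (hS : S⁻¹ = S) (hgen : Subgroup.closure S = ⊤) (g x y : Γ) :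
    (cayleyGraph Γ S).dist (g * x) (g * y) = (cayleyGraph Γ S).dist x y := by
  have key : ∀ g x y : Γ, (cayleyGraph Γ S).dist (g * x) (g * y) ≤
      (cayleyGraph Γ S).dist x y := by
    intro g x y
    obtain ⟨w, hw⟩ := (cayley_connected hS hgen).exists_walk_length_eq_dist x y
    have h := (BPath.of_walk (P := fun _ => True) w (by simp)).map (P := fun _ => True)
      (g * ·) (fun _ _ h => cayley_adj_mul hS g h)
    obtain ⟨w', hw', -⟩ := h.exists_walk
    exact (SimpleGraph.dist_le w').trans (by omega)
  refine le_antisymm (key g x y) ?_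
  simpa using key g⁻¹ (g * x) (g * y)

lemma cayley_bddDegree (hS : S⁻¹ = S) (hfin : S.Finite) : BddDegree (cayleyGraph Γ S) := by
  refine ⟨S.ncard, fun v => ?_⟩
  rw [hfin.cast_ncard_eq, ← (mul_right_injective v).encard_image S]
  refine Set.encard_le_encard ?_
  intro y hy
  exact ⟨v⁻¹ * y, ((cayley_adj hS).1 hy).2, by simp⟩

/-- The growth rate exists by Fekete's lemma, as balls are submultiplicative. -/
lemma cayley_expGrowth (hS : S⁻¹ = S) (hfin : S.Finite) (hgen : Subgroup.closure S = ⊤)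
    {q : ℕ} (hq : 0 < q)
    (hlow : ∀ M : ℕ, 2 ^ M ≤ (gBall (cayleyGraph Γ S) 1 (q * (M + 1))).ncard) :
    HasExpGrowth (cayleyGraph Γ S) 1 := by
  classical
  set X := cayleyGraph Γ S with hX
  have hconn : X.Connected := cayley_connected hS hgen
  obtain ⟨D, hD⟩ := cayley_bddDegree hS hfin
  have hball := fun n => gBall_card hconn hD 1 n
  set b : ℕ → ℕ := fun n => (gBall X 1 n).ncard with hb
  have hpos : ∀ n, 0 < b n := fun n =>
    (Set.ncard_pos (hball n).1).2 ⟨1, by simp [gBall]⟩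
  have hsub : ∀ m n, b (m + n) ≤ b m * b n := by
    intro m n
    have h1 : gBall X 1 (m + n) ⊆
        (fun p : Γ × Γ => p.1 * p.2) '' (gBall X 1 m ×ˢ gBall X 1 n) := by
      intro x hx
      simp only [gBall, Set.mem_ofPred_eq] at hx
      obtain ⟨y, hy1, hy2⟩ := exists_btw hconn (a := 1) (b := x)
        (k := min m (X.dist 1 x)) (by omega)
      refine ⟨(y, y⁻¹ * x), ⟨?_, ?_⟩, by simp⟩
      · simp only [gBall, Set.mem_ofPred_eq]; omega
      · have := cayley_dist_mul hS hgen y⁻¹ y x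
        rw [inv_mul_cancel, ← hX] at this
        simp only [gBall, Set.mem_ofPred_eq, hX]
        rw [this]
        omega
    have hf := (hball m).1.prod (hball n).1
    calc b (m + n) ≤ _ := Set.ncard_le_ncard h1 (hf.image _)
      _ ≤ (gBall X 1 m ×ˢ gBall X 1 n).ncard := Set.ncard_image_le hf
      _ = b m * b n := Set.ncard_prod
  set u : ℕ → ℝ := fun n => Real.log (b n) with hu
  have hu0 : ∀ n, 0 ≤ u n := fun n => Real.log_natCast_nonneg _
  have husub : Subadditive u := by
    intro m n
    have hm : (0 : ℝ) < b m := by exact_mod_cast hpos m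
    have hn : (0 : ℝ) < b n := by exact_mod_cast hpos n
    have hmn : (0 : ℝ) < b (m + n) := by exact_mod_cast hpos (m + n)
    simp only [hu]
    rw [← Real.log_mul hm.ne' hn.ne']
    exact Real.log_le_log hmn (by exact_mod_cast hsub m n)
  have hlim := husub.tendsto_lim ⟨0, by
    rintro _ ⟨n, rfl⟩
    exact div_nonneg (hu0 n) (Nat.cast_nonneg n)⟩
  have hsubseq : Filter.Tendsto (fun M : ℕ => q * (M + 1)) Filter.atTop Filter.atTop :=
    Filter.tendsto_atTop_mono (fun M => by simp only [id]; nlinarith) Filter.tendsto_id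
  have hqr : (0 : ℝ) < q := by exact_mod_cast hq
  have hlog2 : 0 < Real.log 2 := Real.log_pos (by norm_num)
  have hge : Real.log 2 / (2 * q) ≤ husub.lim := by
    refine ge_of_tendsto (hlim.comp hsubseq) ?_
    filter_upwards [Filter.eventually_ge_atTop 1] with M hM
    have hM' : (1 : ℝ) ≤ M := by exact_mod_cast hM
    have h1 : M * Real.log 2 ≤ u (q * (M + 1)) := by
      simp only [hu]
      rw [← Real.log_pow]
      exact Real.log_le_log (by positivity) (by exact_mod_cast hlow M)
    simp only [Function.comp_apply]
    push_cast
    rw [div_le_div_iff₀ (by positivity) (by positivity)]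
    have h2 : M * Real.log 2 * (2 * q) ≤ u (q * (M + 1)) * (2 * q) :=
      mul_le_mul_of_nonneg_right h1 (by positivity)
    nlinarith [mul_nonneg (mul_nonneg hlog2.le hqr.le) (sub_nonneg.2 hM')]
  refine ⟨Real.exp husub.lim, Real.one_lt_exp_iff.2 (lt_of_lt_of_le (by positivity) hge), ?_⟩
  refine ((Real.continuous_exp.tendsto _).comp hlim).congr fun n => ?_
  have hn : (0 : ℝ) < b n := by exact_mod_cast hpos n
  simp only [Function.comp_apply]
  rw [Real.rpow_def_of_pos hn, div_eq_mul_inv]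

/-- If the Cayley graph has points arbitrarily far from `1`, then through `a` there passes a
geodesic of length `2 * T` with midpoint `a`, and one of its halves avoids the ball of radius
`dist 1 a / 2 - 2` around `1`. -/
lemma cayley_escape (hS : S⁻¹ = S) (hgen : Subgroup.closure S = ⊤)
    (hunb : ∀ n, ∃ g, n ≤ (cayleyGraph Γ S).dist 1 g) (a : Γ) (T : ℕ) :
    ∃ p, (cayleyGraph Γ S).dist a p = T ∧ BPath (cayleyGraph Γ S).Adj
      (fun u => (cayleyGraph Γ S).dist 1 a < 2 * (cayleyGraph Γ S).dist 1 u + 4) T a p := by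
  set X := cayleyGraph Γ S with hX
  have hconn : X.Connected := cayley_connected hS hgen
  obtain ⟨p, q, hp, hq, hpq⟩ : ∃ p q, X.dist a p = T ∧ X.dist a q = T ∧ X.dist p q = 2 * T := by
    obtain ⟨g', hg'⟩ := hunb (2 * T)
    obtain ⟨g, hg, -⟩ := exists_btw hconn hg'
    obtain ⟨m, hm1, hm2⟩ := exists_btw hconn (a := 1) (b := g) (k := T) (by omega)
    have htr : ∀ x y, X.dist (a * m⁻¹ * x) (a * m⁻¹ * y) = X.dist x y :=
      cayley_dist_mul hS hgen (a * m⁻¹)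
    have ha : a * m⁻¹ * m = a := by simp
    refine ⟨a * m⁻¹ * 1, a * m⁻¹ * g, ?_, ?_, ?_⟩
    · rw [X.dist_comm]
      have := htr 1 m
      rw [ha] at this
      omega
    · have := htr m g
      rw [ha] at this
      omega
    · rw [htr]; omega
  obtain ⟨w, hw⟩ := hconn.exists_walk_length_eq_dist a p
  obtain ⟨w', hw'⟩ := hconn.exists_walk_length_eq_dist a q
  by_cases h : ∀ u ∈ w.support, X.dist 1 a < 2 * X.dist 1 u + 4
  · exact ⟨p, hp, (BPath.of_walk w h).mono (by omega) fun _ => id⟩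
  by_cases h' : ∀ u ∈ w'.support, X.dist 1 a < 2 * X.dist 1 u + 4
  · exact ⟨q, hq, (BPath.of_walk w' h').mono (by omega) fun _ => id⟩
  push Not at h h'
  obtain ⟨u, hu, hu'⟩ := h
  obtain ⟨v, hv, hv'⟩ := h'
  exfalso
  have b1 := btw_of_mem_geodesic hconn hw hu
  have b2 := btw_of_mem_geodesic hconn hw' hv
  unfold OnGeod at b1 b2
  have t1 := hconn.dist_triangle (u := p) (v := u) (w := q)
  have t2 := hconn.dist_triangle (u := u) (v := v) (w := q)
  have t3 := hconn.dist_triangle (u := u) (v := 1) (w := v)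
  have t4 := hconn.dist_triangle (u := 1) (v := u) (w := a)
  have t5 := hconn.dist_triangle (u := 1) (v := v) (w := a)
  have e1 := X.dist_comm (u := p) (v := u)
  have e2 := X.dist_comm (u := u) (v := 1)
  have e3 := X.dist_comm (u := u) (v := a)
  have e4 := X.dist_comm (u := v) (v := a)
  omega

end Cayley

/-! ### Coordinates on the lamplighter group -/

/-- The lamp configuration of an element of the lamplighter group. -/
def lamp (g : Lamplighter) : ℤ →₀ ZMod 2 := Multiplicative.toAdd g.left

/-- The position of the lamplighter. -/
def cur (g : Lamplighter) : ℤ := Multiplicative.toAdd g.right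

/-- The element with lamp configuration `f` and lamplighter at `k`. -/
def mkL (f : ℤ →₀ ZMod 2) (k : ℤ) : Lamplighter :=
  ⟨Multiplicative.ofAdd f, Multiplicative.ofAdd k⟩

@[simp] lemma lamp_mkL (f : ℤ →₀ ZMod 2) (k : ℤ) : lamp (mkL f k) = f := rfl
@[simp] lemma cur_mkL (f : ℤ →₀ ZMod 2) (k : ℤ) : cur (mkL f k) = k := rfl
@[simp] lemma lamp_one : lamp 1 = 0 := rfl
@[simp] lemma cur_one : cur 1 = 0 := rfl

lemma lamp_ext {x y : Lamplighter} (h : ∀ i, lamp x i = lamp y i) (h' : cur x = cur y) :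
    x = y := by
  refine SemidirectProduct.ext ?_ ?_
  · exact Multiplicative.toAdd.injective (Finsupp.ext h)
  · exact Multiplicative.toAdd.injective h'

@[simp] lemma cur_mul (x y : Lamplighter) : cur (x * y) = cur x + cur y := rfl

lemma lampShift_zpow_apply (k : ℤ) (f : Multiplicative (ℤ →₀ ZMod 2)) (i : ℤ) :
    (Multiplicative.toAdd ((lampShift ^ k) f)) i = (Multiplicative.toAdd f) (i - k) := by
  have h1 : ∀ (f : Multiplicative (ℤ →₀ ZMod 2)) (i : ℤ),
      (Multiplicative.toAdd (lampShift f)) i = (Multiplicative.toAdd f) (i - 1) := by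
    intro f i
    simp [lampShift, Finsupp.equivMapDomain_apply, sub_eq_add_neg]
  induction k generalizing f i with
  | zero => simp
  | succ k ih =>
    rw [zpow_add_one, MulAut.mul_apply, ih, h1]
    congr 1
    ring
  | pred k ih =>
    rw [zpow_sub_one, MulAut.mul_apply, ih]
    have h2 := h1 (lampShift⁻¹ f) (i - -(k : ℤ) + 1)
    rw [← MulAut.mul_apply, mul_inv_cancel, MulAut.one_apply] at h2
    rw [show i - (-(k : ℤ) - 1) = i - -(k : ℤ) + 1 by ring, h2]
    congr 1
    ring

@[simp] lemma lamp_mul (x y : Lamplighter) (i : ℤ) :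
    lamp (x * y) i = lamp x i + lamp y (i - cur x) := by
  have : lamp (x * y) i = lamp x i +
      Multiplicative.toAdd ((lampShift ^ (cur x)) y.left) i := rfl
  rw [this, lampShift_zpow_apply]
  rfl

lemma lamp_inv_mul (x y : Lamplighter) (i : ℤ) :
    lamp (x⁻¹ * y) (i - cur x) = lamp y i - lamp x i := by
  have h := lamp_mul x (x⁻¹ * y) i
  rw [mul_inv_cancel_left] at h
  rw [h]
  ring

lemma cur_inv_mul (x y : Lamplighter) : cur (x⁻¹ * y) = cur y - cur x := by
  have h := cur_mul x (x⁻¹ * y)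
  rw [mul_inv_cancel_left] at h
  rw [h]
  ring

/-- The generator moving the lamplighter by one. -/
def genT : Lamplighter := mkL 0 1

/-- The generator switching the lamp at the position of the lamplighter. -/
noncomputable def genA : Lamplighter := mkL (Finsupp.single 0 1) 0

/-- Adjacency in the Cayley graph with respect to the standard generators. -/
def StdStep (x y : Lamplighter) : Prop :=
  x⁻¹ * y = genT ∨ x⁻¹ * y = genT⁻¹ ∨ x⁻¹ * y = genA

lemma stdStep_move {x y : Lamplighter} (h : ∀ i, lamp x i = lamp y i) (h' : cur y = cur x + 1) :
    StdStep x y := by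
  left
  rw [inv_mul_eq_iff_eq_mul]
  apply lamp_ext
  · intro i; simp [genT, h]
  · simp [genT, h']

lemma stdStep_toggle {x y : Lamplighter} (h : ∀ i, i ≠ cur x → lamp x i = lamp y i)
    (h0 : lamp x (cur x) ≠ lamp y (cur x)) (h' : cur y = cur x) : StdStep x y := by
  right; right
  rw [inv_mul_eq_iff_eq_mul]
  apply lamp_ext
  · intro i
    by_cases hi : i = cur x
    · subst hi
      have : ∀ a b : ZMod 2, a ≠ b → b = a + 1 := by decide
      simpa [genA] using this _ _ h0
    · have : Finsupp.single (0 : ℤ) (1 : ZMod 2) (i - cur x) = 0 :=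
        Finsupp.single_eq_of_ne (by omega)
      simp [genA, this, h i hi]
  · simp [genA, h']

lemma stdStep_symm (x y : Lamplighter) (h : StdStep x y) : StdStep y x := by
  have e : y⁻¹ * x = (x⁻¹ * y)⁻¹ := by simp
  have hA : genA⁻¹ = genA := by
    rw [inv_eq_iff_mul_eq_one]
    apply lamp_ext
    · intro i
      have : ∀ a : ZMod 2, a + a = 0 := by decide
      simp [genA, this]
    · simp [genA]
  unfold StdStep
  rw [e]
  rcases h with h | h | h <;> rw [h]
  · right; left; rfl
  · left; simp
  · right; right; exact hA

/-! ### Paths in the standard Cayley graph -/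

lemma std_move {P : Lamplighter → Prop} (m : ℕ) : ∀ x y : Lamplighter,
    (∀ i, lamp x i = lamp y i) → cur y = cur x + m →
    (∀ z, (∀ i, lamp z i = lamp x i) → cur x ≤ cur z → cur z ≤ cur y → P z) →
    BPath StdStep P m x y := by
  induction m with
  | zero =>
    intro x y h h' hP
    obtain rfl : x = y := lamp_ext h (by simpa using h'.symm)
    exact .nil _ _ (hP _ (fun _ => rfl) le_rfl le_rfl)
  | succ m ih =>
    intro x y h h' hP
    push_cast at h'
    refine .cons (hP x (fun _ => rfl) le_rfl (by omega))
      (stdStep_move (y := mkL (lamp x) (cur x + 1)) (fun _ => rfl) rfl) ?_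
    refine ih _ _ h (by simp; omega) ?_
    intro z hz hz1 hz2
    rw [cur_mkL] at hz1
    exact hP z hz (by omega) hz2

lemma std_move_left {P : Lamplighter → Prop} (m : ℕ) (x y : Lamplighter)
    (h : ∀ i, lamp x i = lamp y i) (h' : cur x = cur y + m)
    (hP : ∀ z, (∀ i, lamp z i = lamp x i) → cur y ≤ cur z → cur z ≤ cur x → P z) :
    BPath StdStep P m x y :=
  (std_move m y x (fun i => (h i).symm) h' fun z hz h1 h2 =>
    hP z (fun i => (hz i).trans (h i).symm) h1 h2).symm stdStep_symm

/-- One switch of the lamp at the current position, if needed. -/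
lemma std_toggle {P : Lamplighter → Prop} {x y : Lamplighter} (hx : P x) (hy : P y)
    (h : ∀ i, i ≠ cur x → lamp x i = lamp y i) (h' : cur y = cur x) :
    BPath StdStep P 1 x y := by
  by_cases h0 : lamp x (cur x) = lamp y (cur x)
  · obtain rfl : x = y := by
      refine lamp_ext (fun i => ?_) h'.symm
      by_cases hi : i = cur x
      · rw [hi, h0]
      · exact h i hi
    exact .nil _ _ hx
  · exact .single hx hy (stdStep_toggle h h0 h')

/-- Changing the lamps in `[k, k + m)`, starting and ending at `k`, by one sweep to the right
and back. -/
lemma std_sweep {P : Lamplighter → Prop} (m : ℕ) : ∀ x y : Lamplighter, cur y = cur x →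
    (∀ i, lamp x i ≠ lamp y i → cur x ≤ i ∧ i < cur x + m) →
    (∀ z, cur x ≤ cur z → cur z ≤ cur x + m →
      (∀ i, (i < cur x ∨ cur x + m ≤ i) → lamp z i = lamp x i) → P z) →
    BPath StdStep P (3 * m) x y := by
  induction m with
  | zero =>
    intro x y h h' hP
    obtain rfl : x = y := by
      refine lamp_ext (fun i => ?_) h.symm
      by_contra hi
      have := h' i hi
      push_cast at this
      omega
    exact .nil _ _ (hP _ le_rfl (by simp) fun _ _ => rfl)
  | succ m ih =>
    intro x y h h' hP
    push_cast at h' hP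
    have hyx : ∀ i, (i < cur x ∨ cur x + (m + 1) ≤ i) → lamp y i = lamp x i := by
      intro i hi
      by_contra hne
      have := h' i (Ne.symm hne)
      omega
    set f := (lamp x).update (cur x) (lamp y (cur x)) with hf
    have hf0 : f (cur x) = lamp y (cur x) := by simp [hf]
    have hf1 : ∀ i, i ≠ cur x → f i = lamp x i := by
      intro i hi
      simp [hf, Function.update_of_ne hi]
    have hP0 : P x := hP x le_rfl (by omega) fun _ _ => rfl
    have hP1 : P (mkL f (cur x)) := hP _ (by simp) (by simp; omega) fun i hi => by
      rw [lamp_mkL, hf1 i (by omega)]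
    have hPy : P y := hP y (by omega) (by omega) hyx
    have s1 : BPath StdStep P 1 x (mkL f (cur x)) :=
      std_toggle hP0 hP1 (fun i hi => by rw [lamp_mkL, hf1 i hi]) (by simp)
    have s3 : BPath StdStep P (3 * m) (mkL f (cur x + 1)) (mkL (lamp y) (cur x + 1)) := by
      refine ih _ _ (by simp) ?_ ?_
      · intro i hi
        rw [lamp_mkL, lamp_mkL] at hi
        rw [cur_mkL]
        by_cases hi0 : i = cur x
        · rw [hi0] at hi; exact absurd hf0 hi
        · rw [hf1 i hi0] at hi
          have := h' i hi
          omega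
      · intro z hz1 hz2 hz3
        rw [cur_mkL] at hz1 hz2 hz3
        refine hP z (by omega) (by omega) ?_
        intro i hi
        rw [hz3 i (by omega), lamp_mkL, hf1 i (by omega)]
    have s2 : BPath StdStep P 1 (mkL f (cur x)) (mkL f (cur x + 1)) :=
      .single hP1 s3.left (stdStep_move (fun _ => rfl) rfl)
    have s4 : BPath StdStep P 1 (mkL (lamp y) (cur x + 1)) y :=
      .single s3.right hPy (stdStep_symm _ _ (stdStep_move (fun _ => rfl) (by simp [h])))
    exact (((s1.trans s2).trans s3).trans s4).mono (by omega) fun _ => id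

/-- The lamplighter, or some lit lamp, is at distance more than `R` from the origin. -/
def Big (R : ℕ) (x : Lamplighter) : Prop :=
  (R : ℤ) < |cur x| ∨ ∃ i : ℤ, (R : ℤ) < |i| ∧ lamp x i ≠ 0

lemma not_big {R : ℕ} {x : Lamplighter} :
    ¬ Big R x ↔ |cur x| ≤ R ∧ ∀ i, lamp x i ≠ 0 → |i| ≤ R := by
  unfold Big
  push Not
  refine and_congr Iff.rfl (forall_congr' fun i => ?_)
  rw [← not_imp_not, not_lt]

lemma std_reach {R : ℕ} {x : Lamplighter} (h : ¬ Big R x) :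
    BPath StdStep (fun _ => True) (9 * R + 3) 1 x := by
  rw [not_big] at h
  obtain ⟨h1, h2⟩ := h
  rw [abs_le] at h1
  have s1 : BPath StdStep (fun _ => True) R 1 (mkL 0 (-R)) :=
    std_move_left R _ _ (fun _ => rfl) (by simp) (by simp)
  have s2 : BPath StdStep (fun _ => True) (3 * (2 * R + 1)) (mkL 0 (-R)) (mkL (lamp x) (-R)) := by
    refine std_sweep _ _ _ rfl ?_ (by simp)
    intro i hi
    have := abs_le.1 (h2 i (fun h0 => hi (by simp [h0])))
    rw [cur_mkL]
    push_cast
    omega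
  have s3 : BPath StdStep (fun _ => True) (cur x + R).toNat (mkL (lamp x) (-R)) x :=
    std_move _ _ _ (fun _ => rfl) (by rw [cur_mkL]; omega) (by simp)
  exact ((s1.trans s2).trans s3).mono (by omega) fun _ => id

/-- The lamps at `p` and `-p` are lit and the lamplighter is at `-p`. -/
noncomputable def hub (p : ℤ) : Lamplighter :=
  mkL (((0 : ℤ →₀ ZMod 2).update p 1).update (-p) 1) (-p)

/-- Every element outside the ball of size `R` can be joined to the hub outside that ball: walk
outwards (away from the origin if the lamplighter is already far), light a lamp further out than
anything else, and rely on it for staying outside the ball while the rest is rearranged. -/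
lemma std_to_hub {R Q : ℕ} (hRQ : R ≤ Q) {x : Lamplighter} (hx : Big R x) (hxQ : ¬ Big Q x) :
    BPath StdStep (Big R) (14 * (Q + 1)) x (hub (Q + 1)) := by
  rw [not_big, abs_le] at hxQ
  obtain ⟨⟨hc1, hc2⟩, hl⟩ := hxQ
  set p : ℤ := (Q : ℤ) + 1 with hp
  have hp0 : |p| = p := abs_of_pos (by omega)
  have hpn : |(-p)| = p := by rw [abs_neg, hp0]
  have hne : -p ≠ p := by omega
  have hlp : ∀ i, lamp x i ≠ 0 → -p < i ∧ i < p := by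
    intro i hi
    have := abs_le.1 (hl i hi)
    omega
  have h10 : (1 : ZMod 2) ≠ 0 := by decide
  have big_cur : ∀ z, (cur z = p ∨ cur z = -p) → Big R z := by
    rintro z (h | h) <;> left <;> rw [h] <;> omega
  have big_lamp : ∀ z, lamp z p = 1 → Big R z := fun z h =>
    Or.inr ⟨p, by omega, by rw [h]; exact h10⟩
  have big_lamp' : ∀ z, lamp z (-p) = 1 → Big R z := fun z h =>
    Or.inr ⟨-p, by omega, by rw [h]; exact h10⟩
  set f₃ := ((lamp x).update p 1).update (-p) 1 with hf₃
  have f₃p : f₃ p = 1 := by simp [hf₃, Function.update_of_ne hne.symm]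
  have sweep : BPath StdStep (Big R) (3 * (2 * (Q + 1))) (mkL f₃ (-p)) (hub p) := by
    refine std_sweep _ _ _ rfl ?_ ?_
    · intro i hi
      rw [cur_mkL]
      push_cast
      by_cases h1 : i = -p
      · omega
      by_cases h2 : i = p
      · subst h2
        exact absurd (by simp [hub, f₃p, Function.update_of_ne hne.symm]) hi
      have := hlp i fun h0 => hi (by
        simp [hub, hf₃, Function.update_of_ne h1, Function.update_of_ne h2, h0,
          show ¬ p = i from fun h => h2 h.symm])
      omega
    · intro z _ _ hz
      refine big_lamp z ?_
      rw [hz p (Or.inr (by rw [cur_mkL]; push_cast; omega)), lamp_mkL, f₃p]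
  have main : BPath StdStep (Big R) (6 * (Q + 1) + 2) x (mkL f₃ (-p)) := by
    rcases lt_or_ge (cur x) (-(R : ℤ)) with hcase | hcase
    · have s1 : BPath StdStep (Big R) (cur x + p).toNat x (mkL (lamp x) (-p)) := by
        refine std_move_left _ _ _ (fun _ => rfl) (by rw [cur_mkL]; omega) ?_
        intro z _ _ hz
        left
        rw [abs_of_neg (by omega)]
        omega
      set f₁ := (lamp x).update (-p) 1 with hf₁
      have f₁p : f₁ (-p) = 1 := by simp [hf₁]
      have s2 : BPath StdStep (Big R) 1 (mkL (lamp x) (-p)) (mkL f₁ (-p)) := by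
        refine std_toggle s1.right (big_lamp' _ f₁p) ?_ rfl
        intro i hi
        rw [cur_mkL] at hi
        simp [hf₁, Function.update_of_ne hi]
      have s3 : BPath StdStep (Big R) (2 * (Q + 1)) (mkL f₁ (-p)) (mkL f₁ p) := by
        refine std_move _ _ _ (fun _ => rfl) (by simp; omega) ?_
        intro z hz _ _
        exact big_lamp' z ((hz _).trans f₁p)
      have s4 : BPath StdStep (Big R) 1 (mkL f₁ p) (mkL f₃ p) := by
        refine std_toggle s3.right (big_cur _ (Or.inl rfl)) ?_ rfl
        intro i hi
        rw [cur_mkL] at hi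
        simp only [hf₁, hf₃, lamp_mkL, Finsupp.coe_update]
        by_cases h1 : i = -p
        · subst h1; simp
        · rw [Function.update_of_ne h1, Function.update_of_ne h1, Function.update_of_ne hi]
      have s5 : BPath StdStep (Big R) (2 * (Q + 1)) (mkL f₃ p) (mkL f₃ (-p)) := by
        refine std_move_left _ _ _ (fun _ => rfl) (by simp; omega) ?_
        intro z hz _ _
        exact big_lamp z ((hz _).trans f₃p)
      exact ((((s1.trans s2).trans s3).trans s4).trans s5).mono (by omega) fun _ => id
    · have s1 : BPath StdStep (Big R) (p - cur x).toNat x (mkL (lamp x) p) := by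
        refine std_move _ _ _ (fun _ => rfl) (by rw [cur_mkL]; omega) ?_
        intro z hz hz1 _
        rcases hx with hx | ⟨i, hi, hi'⟩
        · left
          rcases lt_abs.1 hx with h | h
          · exact lt_abs.2 (Or.inl (by omega))
          · omega
        · exact Or.inr ⟨i, hi, by rwa [hz]⟩
      set f₁ := (lamp x).update p 1 with hf₁
      have f₁p : f₁ p = 1 := by simp [hf₁]
      have s2 : BPath StdStep (Big R) 1 (mkL (lamp x) p) (mkL f₁ p) := by
        refine std_toggle s1.right (big_lamp _ f₁p) ?_ rfl
        intro i hi
        rw [cur_mkL] at hi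
        simp [hf₁, Function.update_of_ne hi]
      have s3 : BPath StdStep (Big R) (2 * (Q + 1)) (mkL f₁ p) (mkL f₁ (-p)) := by
        refine std_move_left _ _ _ (fun _ => rfl) (by simp; omega) ?_
        intro z hz _ _
        exact big_lamp z ((hz _).trans f₁p)
      have s4 : BPath StdStep (Big R) 1 (mkL f₁ (-p)) (mkL f₃ (-p)) := by
        refine std_toggle s3.right (big_cur _ (Or.inr rfl)) ?_ rfl
        intro i hi
        rw [cur_mkL] at hi
        simp [hf₃, Function.update_of_ne hi]
      exact (((s1.trans s2).trans s3).trans s4).mono (by omega) fun _ => id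
  exact (main.trans sweep).mono (by omega) fun _ => id

lemma lamplighter_closure : Subgroup.closure {genT, genA} = (⊤ : Subgroup Lamplighter) := by
  rw [eq_top_iff]
  rintro x -
  obtain ⟨R, hR⟩ : ∃ R : ℕ, ¬ Big R x := by
    have hsum : ∀ i, lamp x i ≠ 0 → i.natAbs ≤ ∑ i ∈ (lamp x).support, i.natAbs := fun i hi =>
      Finset.single_le_sum (f := fun i : ℤ => i.natAbs) (fun _ _ => Nat.zero_le _)
        (Finsupp.mem_support_iff.2 hi)
    refine ⟨(cur x).natAbs + ∑ i ∈ (lamp x).support, i.natAbs, not_big.2 ⟨?_, fun i hi => ?_⟩⟩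
    · rw [Int.abs_eq_natAbs]
      exact_mod_cast Nat.le_add_right _ _
    · rw [Int.abs_eq_natAbs]
      exact_mod_cast (hsum i hi).trans (Nat.le_add_left _ _)
  have key : ∀ n y z, BPath StdStep (fun _ => True) n y z →
      y⁻¹ * z ∈ Subgroup.closure {genT, genA} := by
    intro n y z h
    induction h with
    | nil n x _ => simp
    | @cons n x y z _ h1 _ ih =>
      have e : x⁻¹ * z = (x⁻¹ * y) * (y⁻¹ * z) := by group
      rw [e]
      refine mul_mem ?_ ih
      have ht : genT ∈ Subgroup.closure {genT, genA} := Subgroup.subset_closure (by simp)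
      have ha : genA ∈ Subgroup.closure {genT, genA} := Subgroup.subset_closure (by simp)
      rcases h1 with h1 | h1 | h1 <;> rw [h1]
      · exact ht
      · exact inv_mem ht
      · exact ha
  simpa using key _ _ _ (std_reach hR)

/-! ### Comparing an arbitrary word metric with the coordinates -/

/-- Constants comparing a Cayley graph `X` of the lamplighter group with the coordinates: a path
of length `n` moves the lamplighter by at most `A * n` and only affects lamps that close to its
starting position, and standard steps are realized by paths of length at most `B`. -/
structure Comparison (X : SimpleGraph Lamplighter) (A B : ℕ) : Prop where
  A_pos : 0 < A
  B_pos : 0 < B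
  cur_le : ∀ x y, |cur y - cur x| ≤ (A * X.dist x y : ℕ)
  lamp_le : ∀ x y i, lamp x i ≠ lamp y i → |i - cur x| ≤ (A * X.dist x y : ℕ)
  std : ∀ x y, StdStep x y → BPath X.Adj (fun u => X.dist x u ≤ B) B x y

lemma exists_comparison {S : Set Lamplighter} (hfin : S.Finite) (hS : S⁻¹ = S)
    (hgen : Subgroup.closure S = ⊤) : ∃ A B, Comparison (cayleyGraph Lamplighter S) A B := by
  classical
  set X := cayleyGraph Lamplighter S with hX
  have hconn : X.Connected := cayley_connected hS hgen
  have hbd : ∀ x : Lamplighter, ∃ R : ℕ, |cur x| ≤ R ∧ ∀ i, lamp x i ≠ 0 → |i| ≤ R := by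
    intro x
    have hsum : ∀ i, lamp x i ≠ 0 → i.natAbs ≤ ∑ i ∈ (lamp x).support, i.natAbs := fun i hi =>
      Finset.single_le_sum (f := fun i : ℤ => i.natAbs) (fun _ _ => Nat.zero_le _)
        (Finsupp.mem_support_iff.2 hi)
    refine ⟨(cur x).natAbs + ∑ i ∈ (lamp x).support, i.natAbs, ?_, fun i hi => ?_⟩
    · rw [Int.abs_eq_natAbs]
      exact_mod_cast Nat.le_add_right _ _
    · rw [Int.abs_eq_natAbs]
      exact_mod_cast (hsum i hi).trans (Nat.le_add_left _ _)
  choose ρ hρ1 hρ2 using hbd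
  set A := 1 + ∑ σ ∈ hfin.toFinset, ρ σ with hA
  have hρA : ∀ σ ∈ S, ρ σ ≤ A := fun σ hσ =>
    (Finset.single_le_sum (f := ρ) (fun _ _ => Nat.zero_le _) (hfin.mem_toFinset.2 hσ)).trans
      (Nat.le_add_left _ _)
  have hadj : ∀ x y, X.Adj x y →
      |cur y - cur x| ≤ A ∧ ∀ i, lamp x i ≠ lamp y i → |i - cur x| ≤ A := by
    intro x y h
    have hs := ((cayley_adj hS).1 h).2
    have hle : (ρ (x⁻¹ * y) : ℤ) ≤ A := by exact_mod_cast hρA _ hs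
    constructor
    · rw [← cur_inv_mul]
      exact (hρ1 _).trans hle
    · intro i hi
      refine (hρ2 (x⁻¹ * y) (i - cur x) ?_).trans hle
      rw [lamp_inv_mul]
      exact sub_ne_zero.2 (Ne.symm hi)
  have hwalk : ∀ x y (w : X.Walk x y), |cur y - cur x| ≤ (A * w.length : ℕ) ∧
      ∀ i, lamp x i ≠ lamp y i → |i - cur x| ≤ (A * w.length : ℕ) := by
    intro x y w
    induction w with
    | nil => simp
    | @cons x z y h w ih =>
      obtain ⟨h1, h2⟩ := hadj _ _ h
      obtain ⟨h3, h4⟩ := ih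
      have hlen : ((A * (Walk.cons h w).length : ℕ) : ℤ) = A + (A * w.length : ℕ) := by
        rw [Walk.length_cons]; push_cast; ring
      rw [hlen]
      have hn : (0 : ℤ) ≤ (A * w.length : ℕ) := Int.natCast_nonneg _
      rw [abs_le] at h1 h3
      refine ⟨abs_le.2 ⟨by omega, by omega⟩, fun i hi => ?_⟩
      by_cases hxz : lamp x i = lamp z i
      · have := abs_le.1 (h4 i (hxz ▸ hi))
        exact abs_le.2 ⟨by omega, by omega⟩
      · have := abs_le.1 (h2 i hxz)
        exact abs_le.2 ⟨by omega, by omega⟩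
  set B := 1 + X.dist 1 genT + X.dist 1 genT⁻¹ + X.dist 1 genA with hB
  refine ⟨A, B, by omega, by omega, ?_, ?_, ?_⟩
  · intro x y
    obtain ⟨w, hw⟩ := hconn.exists_walk_length_eq_dist x y
    rw [← hw]
    exact (hwalk x y w).1
  · intro x y
    obtain ⟨w, hw⟩ := hconn.exists_walk_length_eq_dist x y
    rw [← hw]
    exact (hwalk x y w).2
  · intro x y h
    have hd : X.dist x y ≤ B := by
      have h1 := cayley_dist_mul hS hgen x⁻¹ x y
      rw [inv_mul_cancel, ← hX] at h1
      rcases h with h | h | h <;> rw [h] at h1 <;> omega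
    obtain ⟨w, hw⟩ := hconn.exists_walk_length_eq_dist x y
    refine (BPath.of_walk w ?_).mono (hw.trans_le hd) fun _ => id
    intro u hu
    have := btw_of_mem_geodesic hconn hw hu
    unfold OnGeod at this
    omega

namespace Comparison

variable {X : SimpleGraph Lamplighter} {A B : ℕ}

lemma subdivide (h : Comparison X A B) {P : Lamplighter → Prop} {n : ℕ} {x y : Lamplighter}
    (hp : BPath StdStep P n x y) :
    BPath X.Adj (fun u => ∃ z, P z ∧ X.dist z u ≤ B) (B * n) x y :=
  hp.subdivide (near := fun z u => X.dist z u ≤ B) (fun x => by simp) h.std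

lemma dist_le_of_bPath {P : Lamplighter → Prop} {n : ℕ} {x y : Lamplighter}
    (hp : BPath X.Adj P n x y) : X.dist x y ≤ n := by
  obtain ⟨w, hw, -⟩ := hp.exists_walk
  exact (SimpleGraph.dist_le w).trans hw

lemma lt_of_big (h : Comparison X A B) {R : ℕ} {x : Lamplighter} (hx : Big R x) :
    R < A * X.dist 1 x := by
  have : (R : ℤ) < (A * X.dist 1 x : ℕ) := by
    rcases hx with hx | ⟨i, hi, hi'⟩
    · exact hx.trans_le (by simpa using h.cur_le 1 x)
    · exact hi.trans_le (by simpa using h.lamp_le 1 x i (by simpa using hi'.symm))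
  exact_mod_cast this

lemma dist_le_of_not_big (h : Comparison X A B) {R : ℕ} {x : Lamplighter} (hx : ¬ Big R x) :
    X.dist 1 x ≤ B * (9 * R + 3) :=
  dist_le_of_bPath (h.subdivide (std_reach hx))

lemma not_big_of_le (h : Comparison X A B) {Q : ℕ} {x : Lamplighter}
    (hx : A * X.dist 1 x ≤ Q) : ¬ Big Q x := fun hb => by
  have := h.lt_of_big hb
  omega

lemma unbounded (h : Comparison X A B) (n : ℕ) : ∃ g, n ≤ X.dist 1 g := by
  refine ⟨mkL 0 (A * n + 1 : ℕ), ?_⟩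
  have h1 : Big (A * n) (mkL 0 (A * n + 1 : ℕ)) := by
    left
    rw [cur_mkL, Nat.abs_cast]
    exact_mod_cast Nat.lt_succ_self _
  exact (lt_of_mul_lt_mul_left (h.lt_of_big h1) (Nat.zero_le _)).le

end Comparison

/-! ### Linear divergence -/

/-- If `n` is small compared with the distance to `1`, a geodesic from `a` to `b` works. Otherwise
escape from `a` and `b` to distance `O(n)`, so far out that `std_to_hub` can be used with a margin
absorbing the comparison constants. -/
lemma lamplighter_detour {S : Set Lamplighter} (hS : S⁻¹ = S)
    (hgen : Subgroup.closure S = ⊤) {A B : ℕ}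
    (h : Comparison (cayleyGraph Lamplighter S) A B) :
    ∃ C : ℕ, ∀ n a b, (cayleyGraph Lamplighter S).dist a b ≤ n →
      BPath (cayleyGraph Lamplighter S).Adj
        (fun u => min ((cayleyGraph Lamplighter S).dist 1 a) ((cayleyGraph Lamplighter S).dist 1 b)
          < 2 * (cayleyGraph Lamplighter S).dist 1 u + 4) (C * n) a b := by
  set X := cayleyGraph Lamplighter S with hX
  have hconn : X.Connected := cayley_connected hS hgen
  set M := 3 + B * (9 * (A * (1 + B)) + 3) with hM
  refine ⟨2 * M + 28 * B * (A * (1 + B) + A * (M + 2) + 1), ?_⟩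
  intro n a b hab
  set r := min (X.dist 1 a) (X.dist 1 b) with hr
  have ht1 := hconn.dist_triangle (u := 1) (v := a) (w := b)
  have ht2 := hconn.dist_triangle (u := 1) (v := b) (w := a)
  have hcomm := X.dist_comm (u := a) (v := b)
  rcases lt_or_ge n (r + 4) with hn | hn
  · obtain ⟨w, hw⟩ := hconn.exists_walk_length_eq_dist a b
    refine (BPath.of_walk w ?_).mono (m := (2 * M + _) * n) ?_ fun _ => id
    · intro u hu
      have hb := btw_of_mem_geodesic hconn hw hu
      unfold OnGeod at hb
      have t1 := hconn.dist_triangle (u := 1) (v := u) (w := a)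
      have t2 := hconn.dist_triangle (u := 1) (v := u) (w := b)
      have e1 := X.dist_comm (u := u) (v := a)
      omega
    · calc w.length ≤ 1 * n := by omega
        _ ≤ _ := Nat.mul_le_mul_right _ (by omega)
  · have hn1 : 1 ≤ n := by omega
    -- `T` is the escape distance, coordinates larger than `R` keep a path out of the ball, and `Q`
    -- bounds the coordinates of the points reached by the escape.
    set T := M * n with hT
    set R := A * (n + B) with hR
    set Q := R + A * (T + 2 * n) with hQ
    have hRn : R ≤ A * (1 + B) * n := by
      rw [hR, mul_assoc]
      refine Nat.mul_le_mul_left _ ?_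
      nlinarith
    have hTlarge : 2 * n + B * (9 * R + 3) < T := by
      have h1 : B * (9 * R + 3) ≤ B * ((9 * (A * (1 + B)) + 3) * n) :=
        Nat.mul_le_mul_left _ (by nlinarith)
      have h2 : T = 3 * n + B * ((9 * (A * (1 + B)) + 3) * n) := by
        rw [hT, hM]; ring
      omega
    have key : ∀ a', X.dist 1 a' ≤ 2 * n → r ≤ X.dist 1 a' → BPath X.Adj
        (fun u => r < 2 * X.dist 1 u + 4) (T + B * (14 * (Q + 1))) a' (hub (Q + 1)) := by
      intro a' ha' hra'
      obtain ⟨p, hp, hpath⟩ := cayley_escape hS hgen h.unbounded a' T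
      rw [← hX] at hp hpath
      have t1 := hconn.dist_triangle (u := a') (v := 1) (w := p)
      have t2 := hconn.dist_triangle (u := 1) (v := a') (w := p)
      have e1 := X.dist_comm (u := a') (v := 1)
      have hbig : Big R p := by
        by_contra hnb
        have := h.dist_le_of_not_big hnb
        omega
      have hnb : ¬ Big Q p := h.not_big_of_le <| by
        have : A * X.dist 1 p ≤ A * (T + 2 * n) := Nat.mul_le_mul_left _ (by omega)
        omega
      refine (hpath.mono le_rfl fun u hu => by omega).trans
        ((h.subdivide (std_to_hub (by omega) hbig hnb)).mono le_rfl ?_)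
      rintro u ⟨z, hz, hzu⟩
      have h1 := h.lt_of_big hz
      have h2 := lt_of_mul_lt_mul_left h1 (Nat.zero_le _)
      have t3 := hconn.dist_triangle (u := 1) (v := u) (w := z)
      have e3 := X.dist_comm (u := u) (v := z)
      omega
    have pa := key a (by omega) (by omega)
    have pb := key b (by omega) (by omega)
    refine (pa.trans (pb.symm fun _ _ h => h.symm)).mono ?_ fun _ => id
    have hQn : Q + 1 ≤ (A * (1 + B) + A * (M + 2) + 1) * n := by
      have : A * (T + 2 * n) = A * (M + 2) * n := by rw [hT]; ring
      rw [add_mul, add_mul]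
      omega
    have := Nat.mul_le_mul_left (28 * B) hQn
    calc _ = 2 * T + 28 * B * (Q + 1) := by ring
      _ ≤ 2 * T + 28 * B * ((A * (1 + B) + A * (M + 2) + 1) * n) := by omega
      _ = _ := by rw [hT]; ring

lemma lamplighter_div {S : Set Lamplighter} (hS : S⁻¹ = S)
    (hgen : Subgroup.closure S = ⊤) {A B : ℕ}
    (h : Comparison (cayleyGraph Lamplighter S) A B) :
    ∃ C : ℝ, 0 ≤ C ∧ ∀ n : ℕ, DivLE (cayleyGraph Lamplighter S) n (C * n) := by
  obtain ⟨C, hC⟩ := lamplighter_detour hS hgen h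
  set X := cayleyGraph Lamplighter S with hX
  have hconn : X.Connected := cayley_connected hS hgen
  refine ⟨C, Nat.cast_nonneg C, ?_⟩
  intro n a b c hab _ _
  have tr := cayley_dist_mul hS hgen c⁻¹
  rw [← hX] at tr
  have e : ∀ u, X.dist 1 (c⁻¹ * u) = X.dist c u := fun u => by
    rw [← tr c u, inv_mul_cancel]
  have h1 := hC n (c⁻¹ * a) (c⁻¹ * b) (by rwa [tr])
  rw [e, e] at h1
  have h2 := BPath.map (P := fun u => min (X.dist c a) (X.dist c b) < 2 * X.dist c u + 4)
    (c * ·) (fun _ _ h => cayley_adj_mul hS c h) (h1.mono le_rfl fun u hu => by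
      have := e (c * u)
      rw [inv_mul_cancel_left] at this
      rwa [← this])
  simp only [mul_inv_cancel_left] at h2
  obtain ⟨w, hw, hP⟩ := h2.exists_walk
  refine ⟨w, by exact_mod_cast hw, fun u hu => ?_⟩
  have h3 : ((min (X.dist c a) (X.dist c b) : ℕ) : ℝ) < 2 * X.dist c u + 4 := by
    exact_mod_cast hP u hu
  push_cast at h3
  linarith

/-! ### Fat bigons -/

/-- The configuration in which exactly the lamps in `s` are lit. -/
noncomputable def lampsOn (s : Finset ℤ) : ℤ →₀ ZMod 2 := Finsupp.indicator s fun _ _ => 1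

lemma lampsOn_apply (s : Finset ℤ) (i : ℤ) : lampsOn s i = if i ∈ s then 1 else 0 := by
  simp [lampsOn, Finsupp.indicator_apply]

/-- The element with lamplighter at the origin and lit lamps `s ∪ {M}`. -/
noncomputable def elt (M : ℕ) (s : Finset ℤ) : Lamplighter := mkL (lampsOn (insert (M : ℤ) s)) 0

lemma card_of_elt {T : Set Lamplighter} (hT : T.Finite) (M : ℕ)
    (h : ∀ s, s ⊆ Finset.Ico (0 : ℤ) M → elt M s ∈ T) : 2 ^ M ≤ T.ncard := by
  classical
  rw [Set.ncard_eq_toFinset_card _ hT]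
  have h1 := Finset.card_le_card_of_injOn (s := (Finset.Ico (0 : ℤ) M).powerset)
    (t := hT.toFinset) (elt M)
    (fun s hs => hT.mem_toFinset.2 (h s (Finset.mem_powerset.1 (Finset.mem_coe.1 hs)))) (by
      intro s hs t ht hst
      have hs' := Finset.mem_powerset.1 (Finset.mem_coe.1 hs)
      have ht' := Finset.mem_powerset.1 (Finset.mem_coe.1 ht)
      ext i
      have hi : lampsOn (insert (M : ℤ) s) i = lampsOn (insert (M : ℤ) t) i :=
        congrArg (fun g => lamp g i) hst
      have hsM : (M : ℤ) ∉ s := fun hm => by simpa using hs' hm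
      have htM : (M : ℤ) ∉ t := fun hm => by simpa using ht' hm
      by_cases hiM : i = M
      · subst hiM; simp [hsM, htM]
      · rw [lampsOn_apply, lampsOn_apply] at hi
        simp only [Finset.mem_insert, hiM, false_or] at hi
        by_cases h1 : i ∈ s <;> by_cases h2 : i ∈ t <;> simp_all)
  simpa [Finset.card_powerset] using h1

/-- `elt M s` is reached by a path that never touches the lamps on the far left. -/
lemma Comparison.path_elt {X : SimpleGraph Lamplighter} {A B : ℕ} (h : Comparison X A B)
    {M : ℕ} {s : Finset ℤ} (hs : s ⊆ Finset.Ico (0 : ℤ) M) :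
    BPath X.Adj (fun u => ∀ i : ℤ, i < -((A * B : ℕ) : ℤ) → lamp u i = 0) (3 * B * (M + 1))
      1 (elt M s) := by
  have hstd : BPath StdStep (fun z => 0 ≤ cur z ∧ ∀ i : ℤ, i < 0 → lamp z i = 0) (3 * (M + 1))
      1 (elt M s) := by
    refine std_sweep _ _ _ rfl ?_ ?_
    · intro i hi
      have hmem : i ∈ insert (M : ℤ) s := by
        by_contra hn
        exact hi (by simp [elt, lampsOn_apply, hn])
      rw [cur_one]
      push_cast
      rcases Finset.mem_insert.1 hmem with rfl | hm
      · omega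
      · have := Finset.mem_Ico.1 (hs hm)
        omega
    · intro z hz _ hz'
      exact ⟨hz, fun i hi => by rw [hz' i (Or.inl hi)]; rfl⟩
  refine (h.subdivide hstd).mono (by rw [mul_left_comm, mul_assoc]) ?_
  rintro u ⟨z, ⟨hz1, hz2⟩, hzu⟩ i hi
  by_contra hne
  have h0 : (0 : ℤ) ≤ (A * B : ℕ) := Int.natCast_nonneg _
  have h1 := abs_le.1 (h.lamp_le z u i (by rw [hz2 i (by omega)]; exact Ne.symm hne))
  have h2 : ((A * X.dist z u : ℕ) : ℤ) ≤ (A * B : ℕ) := by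
    exact_mod_cast Nat.mul_le_mul_left _ hzu
  omega

/-- Two elements whose configurations differ at the lamps `-p` and `-2p` are far apart. -/
lemma Comparison.le_of_differ {X : SimpleGraph Lamplighter} {A B : ℕ} (h : Comparison X A B)
    {p : ℕ} {u v : Lamplighter} (h1 : lamp u (-p) ≠ lamp v (-p))
    (h2 : lamp u (-(2 * p)) ≠ lamp v (-(2 * p))) : p ≤ 2 * (A * X.dist u v) := by
  have a1 := abs_le.1 (h.lamp_le u v _ h1)
  have a2 := abs_le.1 (h.lamp_le u v _ h2)
  have : (p : ℤ) ≤ 2 * ((A * X.dist u v : ℕ) : ℤ) := by omega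
  exact_mod_cast this

/-- The bigon at `x = elt M s`. One side is the path `γ` of `Comparison.path_elt`. The other side
first lights two lamps `-p`, `-2p` on the left (element `τ`), then follows the translate `τ γ` to
`τ x = x τ`, and finally switches the two lamps off. -/
lemma Comparison.isBigonAt {S : Set Lamplighter} (hS : S⁻¹ = S)
    (hgen : Subgroup.closure S = ⊤) {A B : ℕ}
    (h : Comparison (cayleyGraph Lamplighter S) A B) (N : ℕ) :
    ∃ C : ℕ, ∀ M, 2 * C + 1 ≤ M → ∀ s, s ⊆ Finset.Ico (0 : ℤ) M → ∀ t : ℝ, t ≤ N →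
      IsBigonAt (cayleyGraph Lamplighter S) 1 (6 * A * B : ℕ) t C (elt M s) := by
  set X := cayleyGraph Lamplighter S with hX
  have hconn : X.Connected := cayley_connected hS hgen
  set p : ℕ := A * B + 2 * A * N + 1 with hp
  set τ : Lamplighter := mkL (lampsOn {-(p : ℤ), -(2 * p : ℤ)}) 0 with hτ
  have hτ1 : lamp τ (-p) = 1 := by simp [hτ, lampsOn_apply]
  have hτ2 : lamp τ (-(2 * p)) = 1 := by simp [hτ, lampsOn_apply]
  refine ⟨X.dist 1 τ, fun M hM s hs t ht => ?_⟩
  set C := X.dist 1 τ with hC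
  set x := elt M s with hx
  have hxτ : τ * x = x * τ := by
    apply lamp_ext
    · intro i
      simp [hτ, hx, elt, add_comm]
    · simp [hτ, hx, elt]
  have hlong : M ≤ A * X.dist 1 x := by
    have h1 : lamp x M = 1 := by simp [hx, elt, lampsOn_apply]
    have h2 := h.lamp_le 1 x M (by rw [h1, lamp_one]; simp)
    rw [cur_one, sub_zero, Nat.abs_cast] at h2
    exact_mod_cast h2
  have hlen : C + 3 * B * (M + 1) + C ≤ 6 * A * B * X.dist 1 x := by
    have h1 : 6 * B * M ≤ 6 * B * (A * X.dist 1 x) := Nat.mul_le_mul_left _ hlong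
    have h2 : 6 * A * B * X.dist 1 x = 6 * B * (A * X.dist 1 x) := by ring
    have h3 : B * (2 * C + 1) ≤ B * M := Nat.mul_le_mul_left _ hM
    have h4 := h.B_pos
    have h5 : C ≤ B * C := Nat.le_mul_of_pos_left _ h4
    nlinarith
  have hγ := h.path_elt hs
  obtain ⟨α₂, hα₂, hP₂⟩ := hγ.exists_walk
  have hgeo : ∀ a b : Lamplighter, BPath X.Adj (fun u => X.dist a u ≤ X.dist a b)
      (X.dist a b) a b := by
    intro a b
    obtain ⟨w, hw⟩ := hconn.exists_walk_length_eq_dist a b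
    refine (BPath.of_walk w fun u hu => ?_).mono hw.le fun _ => id
    have := btw_of_mem_geodesic hconn hw hu
    unfold OnGeod at this
    omega
  have htr : X.dist x (x * τ) = C := by
    have := cayley_dist_mul hS hgen x 1 τ
    rwa [mul_one] at this
  -- Outside the `C`-balls around the endpoints, the first side is a translate by `τ`.
  set P : Lamplighter → Prop := fun u => X.dist 1 u ≤ C ∨ X.dist x u ≤ C ∨
    ∃ w, u = τ * w ∧ ∀ i : ℤ, i < -((A * B : ℕ) : ℤ) → lamp w i = 0 with hP
  have q1 : BPath X.Adj P C 1 τ := (hgeo 1 τ).mono le_rfl fun u hu => Or.inl hu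
  have q2 : BPath X.Adj P (3 * B * (M + 1)) τ (x * τ) := by
    have := BPath.map (P := P) (τ * ·) (fun _ _ h => cayley_adj_mul hS τ h)
      (hγ.mono le_rfl fun w hw => Or.inr (Or.inr ⟨w, rfl, hw⟩))
    simp only [mul_one] at this
    rwa [← hx, hxτ] at this
  have q3 : BPath X.Adj P C (x * τ) x :=
    ((hgeo x (x * τ)).mono htr.le fun u hu => Or.inr (Or.inl (hu.trans htr.le))).symm
      fun _ _ h => h.symm
  obtain ⟨α₁, hα₁, hP₁⟩ := ((q1.trans q2).trans q3).exists_walk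
  refine ⟨α₁, α₂, ?_, ?_, ?_⟩
  · exact_mod_cast hα₁.trans hlen
  · exact_mod_cast hα₂.trans (by omega)
  · rintro u hu v hv ⟨hu1, hu2⟩ -
    have hu1' : C < X.dist 1 u := by exact_mod_cast hu1
    have hu2' : C < X.dist x u := by exact_mod_cast hu2
    rcases hP₁ u hu with h1 | h1 | ⟨w, rfl, hw⟩
    · omega
    · omega
    have hv' := hP₂ v hv
    have l1 : -(p : ℤ) < -((A * B : ℕ) : ℤ) := by
      have : A * B < p := by omega
      omega
    have l2 : -(2 * p : ℤ) < -((A * B : ℕ) : ℤ) := by omega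
    have hcτ : cur τ = 0 := rfl
    have d := h.le_of_differ (p := p) (u := τ * w) (v := v)
      (by rw [lamp_mul, hcτ, sub_zero, hτ1, hw _ l1, hv' _ l1]; simp)
      (by rw [lamp_mul, hcτ, sub_zero, hτ2, hw _ l2, hv' _ l2]; simp)
    have d2 : 2 * A * N < 2 * A * X.dist (τ * w) v := by
      rw [mul_assoc 2 A (X.dist _ _)]
      omega
    have d3 : N < X.dist (τ * w) v := lt_of_mul_lt_mul_left d2 (Nat.zero_le _)
    exact ht.trans_lt (by exact_mod_cast d3)

lemma Comparison.dist_elt {X : SimpleGraph Lamplighter} {A B : ℕ} (h : Comparison X A B)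
    {M : ℕ} {s : Finset ℤ} (hs : s ⊆ Finset.Ico (0 : ℤ) M) :
    elt M s ∈ gBall X 1 (3 * B * (M + 1)) :=
  Comparison.dist_le_of_bPath (h.path_elt hs)

lemma lamplighter_bigons {S : Set Lamplighter} (hfin : S.Finite) (hS : S⁻¹ = S)
    (hgen : Subgroup.closure S = ⊤) {A B : ℕ}
    (h : Comparison (cayleyGraph Lamplighter S) A B) :
    HasExpManyFatBigons (cayleyGraph Lamplighter S) 1 := by
  obtain ⟨D, hD⟩ := cayley_bddDegree hS hfin
  have hball := gBall_card (cayley_connected hS hgen) hD 1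
  have hA := h.A_pos
  have hB := h.B_pos
  -- There are `2 ^ M` bigon vertices in the ball of radius `3 * B * (M + 1) ≤ 6 * B * M`.
  set c : ℝ := (2 : ℝ) ^ (((6 * B : ℕ) : ℝ)⁻¹) with hc
  have hc6 : c ^ (6 * B) = 2 := Real.rpow_inv_natCast_pow (by norm_num) (by omega)
  have hc1 : 1 < c := Real.one_lt_rpow (by norm_num) (by positivity)
  have hL : 1 < 6 * A * B := by nlinarith [Nat.mul_le_mul hA hB]
  refine ⟨0, c, (6 * A * B : ℕ), le_rfl, hc1, by exact_mod_cast hL, fun t _ => ?_⟩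
  obtain ⟨C, hC⟩ := h.isBigonAt hS hgen ⌈t⌉₊
  refine ⟨C, Nat.cast_nonneg C, ?_⟩
  refine Set.infinite_of_injective_forall_mem (f := fun k : ℕ => 3 * B * (2 * C + 1 + k + 1)) ?_ ?_
  · intro k k' hk
    have := Nat.eq_of_mul_eq_mul_left (by omega) hk
    omega
  · intro k
    set M := 2 * C + 1 + k with hM
    have hcard := card_of_elt (T := bigonSet (cayleyGraph Lamplighter S) 1 (6 * A * B : ℕ) t C ∩
      gBall (cayleyGraph Lamplighter S) 1 (3 * B * (M + 1)))
      ((hball _).1.subset Set.inter_subset_right) M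
      fun s hs => ⟨hC M (by omega) s hs t (Nat.le_ceil t), h.dist_elt hs⟩
    have hpow : c ^ (3 * B * (M + 1)) ≤ (2 : ℝ) ^ M := by
      refine le_of_sq_le_sq ?_ (by positivity)
      rw [← pow_mul, ← pow_mul, show 3 * B * (M + 1) * 2 = 6 * B * (M + 1) by ring, pow_mul, hc6]
      exact pow_le_pow_right₀ (by norm_num) (by omega)
    exact hpow.trans (by exact_mod_cast hcard)

/-- The lamplighter group `ℤ₂ ≀ ℤ` is finitely generated, has exponential
growth and linear divergence, hence any of its Cayley graphs has exponentially many fat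
bigons; consequently it admits no coarse embedding into any `δ`-hyperbolic connected graph
of uniformly bounded degree. -/
theorem lamplighter_no_coarse_embedding :
    Group.FG Lamplighter ∧
    ∀ S : Set Lamplighter, S.Finite → S⁻¹ = S → Subgroup.closure S = ⊤ →
      HasExpGrowth (cayleyGraph Lamplighter S) 1 ∧
      (∃ C : ℝ, 0 ≤ C ∧ ∀ n : ℕ, DivLE (cayleyGraph Lamplighter S) n (C * n)) ∧
      HasExpManyFatBigons (cayleyGraph Lamplighter S) 1 ∧
      ∀ (W : Type*) (Y : SimpleGraph W), Y.Connected → BddDegree Y →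
        ∀ δ : ℝ, 1 ≤ δ → GraphHyperbolic Y δ →
          ∀ (f : Lamplighter → W) (K : ℝ) (ρ : ℕ → ℕ),
            ¬ IsCoarseEmbedding (cayleyGraph Lamplighter S) Y f K ρ := by
  refine ⟨(Group.fg_iff).2 ⟨{genT, genA}, lamplighter_closure, Set.toFinite _⟩, ?_⟩
  intro S hfin hS hgen
  obtain ⟨A, B, h⟩ := exists_comparison hfin hS hgen
  have hbig := lamplighter_bigons hfin hS hgen h
  obtain ⟨D, hD⟩ := cayley_bddDegree hS hfin
  have hconn := cayley_connected hS hgen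
  refine ⟨cayley_expGrowth hS hfin hgen (q := 3 * B) (by have := h.B_pos; omega) fun M => ?_,
    lamplighter_div hS hgen h, hbig, ?_⟩
  · exact card_of_elt (gBall_card hconn hD 1 _).1 M fun s hs => h.dist_elt hs
  · intro W Y hY bY δ _ hδ f K ρ
    exact no_coarse_embedding_of_bigons hconn ⟨D, hD⟩ hY bY hbig hδ f K ρ
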